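/- Let 𝒢 be a finite graph of groups over a finite connected graph Λ with at least one edge, in which every edge group G_e is finitely generated. If for every directed edge e of Λ the vertex group G_{t(e)} corresponding to the terminal vertex t(e) of e is autostackable respecting the subgroup η_e(G_e), then the fundamental group π₁(𝒢) is autostackable. -/

import Mathlib

/-!
Write `Γ = π₁(𝒢)`. The proof describes `Γ` by reduced syllable sequences and builds the stacking
function of `Γ` from those of the vertex groups.

**Normal forms.** For each edge `e`, the structure of `G_{t(e)}` respecting `H_e = η_e(G_e)` has
its own finite alphabet and a set of words forming a transversal for the right cosets of `H_e`. All
these alphabets are used, disjointly, together with one letter for each edge outside the spanning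
tree. A base vertex, treated as an additional edge with trivial edge group, takes care of the start
of a sequence: an autostackable structure always respects the trivial subgroup
(`AutostackableRespecting.bot`). A reduced sequence consists of a transversal word at the base
vertex, followed by edges and transversal words for their edge groups along an edge path, where
an empty word between an edge and its reverse is forbidden (`GraphData.Valid`). For each `γ ∈ Γ` and
each vertex `v`, exactly one reduced sequence ending at `v` represents `γ`. Existence is right
multiplication by vertex groups and edges (`exists_act`, `exists_edge`). Uniqueness is the normal
form theorem of Bass-Serre theory: the vertex groups and the edges act on reduced sequences, and
transport along the spanning tree turns this into an action of `Γ` by permutations of the sequences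
ending at the base vertex (`permV`, `permE`, `perm_conj`). An element of `Γ` then determines its
sequence by the image of the trivial one (`sval_inj`); as a by-product the vertex groups embed in
`Γ` (`κ_inj`). The normal forms of `Γ` are the words spelled by reduced sequences. Tree edges
contribute no letter, so that sequences for `γ` ending at different vertices spell the same word.

**Stacking.** An edge letter is never rewritten. A letter `a` of the group at `v` is read on the
sequence ending at `v` (`phiAt`). If `a` does not belong to the alphabet of the top edge, it is
rewritten over that alphabet. If the top syllable is empty and `a` is a generator of the edge group,
`a` is conjugated across the edge. Otherwise the stacking function of the vertex group
is applied to the top syllable; by invariance under translation by the edge group this is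
what the stacking function does on whole normal forms of the vertex group. Conjugation across an
edge decreases the number of syllables, and between two such steps the reduction follows that
of a vertex group, so the process terminates (`acc_inl`).

**Regularity.** What the stacking function needs to know about a normal form is, for each vertex, the
top edge, the edge below it and the state reached on the top syllable by an automaton of the vertex
group. This is a finite amount of data which can be updated letter by letter (`finObs_main`).
Regularity is handled throughout as observability by a finite right congruence (`FinObs`);
for functions with values of bounded length this amounts to synchronous regularity of the graph
(`SyncRegular3.finObs_phi`, `syncRegular3_of_finObs`).

These properties are collected in `GraphData.Good`; `gog_good` verifies them for `π₁(𝒢)` and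
`GraphData.Good.autostackable` draws the conclusion.
-/

/-- Evaluation of a word over an alphabet `α` in a monoid `G` via a letter map `π`. -/
def wordVal {G : Type} [Monoid G] {α : Type} (π : α → G) (w : List α) : G :=
  (w.map π).prod

/-- A language is prefix-closed if it contains every prefix of each of its words. -/
def PrefixClosed {α : Type} (N : Set (List α)) : Prop :=
  ∀ w ∈ N, ∀ p : List α, p <+: w → p ∈ N

/-- `(α, π, inv)` is a finite inverse-closed generating set for the group `G`:
no letter represents the identity, `inv` is an involution with `π (inv a) = (π a)⁻¹`,
and the letters generate `G`. -/
structure IsInvGenSet (G : Type) [Group G] {α : Type} (π : α → G) (inv : α → α) : Prop where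
  ne_one : ∀ a, π a ≠ 1
  inv_invol : ∀ a, inv (inv a) = a
  val_inv : ∀ a, π (inv a) = (π a)⁻¹
  gen : Subgroup.closure (Set.range π) = ⊤

/-- A language over `α` is regular if it is accepted by a finite state automaton. -/
def IsRegularLang {α : Type} (L : Set (List α)) : Prop :=
  ∃ (σ : Type) (_ : Fintype σ) (M : DFA α σ), M.accepts = L

/-- The padded word over `(α ∪ {$})²` corresponding to a pair of words;
`none` plays the role of the padding symbol `$`. -/
def padWord2 {α : Type} (p : List α × List α) : List (Option α × Option α) :=
  (List.range (max p.1.length p.2.length)).map (fun i => (p.1[i]?, p.2[i]?))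

/-- Synchronous regularity of a set of pairs of words. -/
def SyncRegular2 {α : Type} (L : Set (List α × List α)) : Prop :=
  IsRegularLang (padWord2 '' L)

/-- The padded word over `(α ∪ {$})³` corresponding to a triple of words. -/
def padWord3 {α : Type} (p : List α × List α × List α) :
    List (Option α × Option α × Option α) :=
  (List.range (max p.1.length (max p.2.1.length p.2.2.length))).map
    (fun i => (p.1[i]?, p.2.1[i]?, p.2.2[i]?))

/-- Synchronous regularity of a set of triples of words. -/
def SyncRegular3 {α : Type} (L : Set (List α × List α × List α)) : Prop :=
  IsRegularLang (padWord3 '' L)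

structure StackingData (α : Type) where
  N : Set (List α)
  K : ℕ
  phi : List α → α → List α

/-- `st` is a stackable structure for `G` over the finite inverse-closed generating
set `(α, π, inv)`. -/
structure IsStacking (G : Type) [Group G] {α : Type} (π : α → G) (inv : α → α)
    (st : StackingData α) : Prop where
  gen : IsInvGenSet G π inv
  nf : ∀ g : G, ∃! w, w ∈ st.N ∧ wordVal π w = g
  prefixClosed : PrefixClosed st.N
  F1 : ∀ y ∈ st.N, ∀ a : α, wordVal π (st.phi y a) = π a ∧ (st.phi y a).length ≤ st.K
  F2 : ∀ y ∈ st.N, ∀ a : α, (y ++ [a] ∈ st.N ∨ ∃ y', y = y' ++ [inv a]) → st.phi y a = [a]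
  F3 : ¬ ∃ seq : ℕ → List α × α,
      ∀ i : ℕ, (seq i).1 ∈ st.N ∧ (seq i).1 ++ [(seq i).2] ∉ st.N ∧
        (¬ ∃ y', (seq i).1 = y' ++ [inv (seq i).2]) ∧
        ∃ u u' : List α, st.phi (seq i).1 (seq i).2 = u ++ (seq (i+1)).2 :: u' ∧
          (seq (i+1)).1 ∈ st.N ∧
          wordVal π ((seq (i+1)).1) = wordVal π ((seq i).1 ++ u)

/-- The regularity conditions making a stackable structure autostackable:
the set of normal forms is regular and the graph of the stacking function is
synchronously regular. -/
def StackingData.IsAuto {α : Type} (st : StackingData α) : Prop :=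
  IsRegularLang st.N ∧
  SyncRegular3 {t : List α × List α × List α | ∃ y ∈ st.N, ∃ a : α, t = (y, [a], st.phi y a)}

/-- The stacking structure `st` respects the subgroup `H`. -/
def RespectsSubgroup {G : Type} [Group G] {α : Type} (π : α → G) (inv : α → α)
    (st : StackingData α) (H : Subgroup G) : Prop :=
  ∃ B : Set α,
    (∀ b ∈ B, inv b ∈ B) ∧
    (∀ b ∈ B, π b ∈ H) ∧
    Subgroup.closure (π '' B) = H ∧
    ∃ NH NTr : Set (List α),
      (∀ w ∈ NH, ∀ b ∈ w, b ∈ B) ∧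
      PrefixClosed NH ∧
      (∀ h : G, h ∈ H → ∃! w, w ∈ NH ∧ wordVal π w = h) ∧
      PrefixClosed NTr ∧
      (∀ g : G, ∃! w, w ∈ NTr ∧ wordVal π w * g⁻¹ ∈ H) ∧
      st.N = {w | ∃ u ∈ NH, ∃ v ∈ NTr, w = u ++ v} ∧
      (∀ y ∈ st.N, wordVal π y ∈ H → ∀ b ∈ B, ∀ c ∈ st.phi y b, c ∈ B) ∧
      (∀ a : α, ∀ y ∈ st.N, ∀ y' ∈ st.N,
        ¬(wordVal π y ∈ H ∧ a ∈ B) →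
        (∃ h ∈ H, wordVal π y' = h * wordVal π y) → st.phi y' a = st.phi y a)

/-- A group is autostackable if it admits an autostackable structure over some
finite inverse-closed generating set. -/
def Autostackable (G : Type) [Group G] : Prop :=
  ∃ (α : Type) (_ : Fintype α) (π : α → G) (inv : α → α) (st : StackingData α),
    IsStacking G π inv st ∧ st.IsAuto

/-- A group is stackable if it admits a stackable structure over some
finite inverse-closed generating set. -/
def Stackable (G : Type) [Group G] : Prop :=
  ∃ (α : Type) (_ : Fintype α) (π : α → G) (inv : α → α) (st : StackingData α),
    IsStacking G π inv st

/-- `G` is autostackable respecting the subgroup `H`. -/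
def AutostackableRespecting (G : Type) [Group G] (H : Subgroup G) : Prop :=
  ∃ (α : Type) (_ : Fintype α) (π : α → G) (inv : α → α) (st : StackingData α),
    IsStacking G π inv st ∧ st.IsAuto ∧ RespectsSubgroup π inv st H

/-- `G` is stackable respecting the subgroup `H`. -/
def StackableRespecting (G : Type) [Group G] (H : Subgroup G) : Prop :=
  ∃ (α : Type) (_ : Fintype α) (π : α → G) (inv : α → α) (st : StackingData α),
    IsStacking G π inv st ∧ RespectsSubgroup π inv st H

/-- `IsEdgePath ι τ u p v` asserts that the list of directed edges `p` is an edge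
path from the vertex `u` to the vertex `v`, where `ι` and `τ` give the initial and
terminal vertices of a directed edge. -/
def IsEdgePath {V E : Type} (ι τ : E → V) : V → List E → V → Prop
  | u, [], v => u = v
  | u, e :: p, v => ι e = u ∧ IsEdgePath ι τ (τ e) p v

section GraphOfGroups

variable {V E : Type} (bar : E → E) (t : E → V)
  (Gv : V → Type) [instGv : ∀ v, Group (Gv v)]
  (Ge : E → Type) [instGe : ∀ e, Group (Ge e)]
  (T : Set E)

/-- The group `(∗_{v ∈ V} G_v) ∗ F(E₁)`, where `E₁` is the set of directed edges
not in the spanning tree `T`. -/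
def GoGBase : Type :=
  Monoid.Coprod (Monoid.CoprodI Gv) (FreeGroup {e : E // e ∉ T})

instance : Group (GoGBase Gv T) :=
  inferInstanceAs (Group (Monoid.Coprod (Monoid.CoprodI Gv) (FreeGroup {e : E // e ∉ T})))

/-- The canonical map of a vertex group into `GoGBase`. -/
def gogVin (v : V) : Gv v →* GoGBase Gv T :=
  Monoid.Coprod.inl.comp Monoid.CoprodI.of

/-- The generator of `GoGBase` corresponding to an edge outside the spanning tree. -/
def gogEin (e : {e : E // e ∉ T}) : GoGBase Gv T :=
  Monoid.Coprod.inr (FreeGroup.of e)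

variable (η : ∀ e, Ge e →* Gv (t e)) (hGe : ∀ e, Ge (bar e) = Ge e)

/-- The relators defining the fundamental group of the graph of groups:
`ē = e⁻¹` for edges outside the tree, `η_e(g) = η_{ē}(g)` for tree edges, and
`e·η_e(g)·e⁻¹ = η_{ē}(g)` for non-tree edges. -/
def gogRels : Set (GoGBase Gv T) :=
  {x | ∃ (e : E) (he : e ∉ T) (hbe : bar e ∉ T),
      x = gogEin Gv T ⟨bar e, hbe⟩ * gogEin Gv T ⟨e, he⟩} ∪
  {x | ∃ e ∈ T, ∃ g : Ge e,
      x = gogVin Gv T (t e) (η e g) *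
        (gogVin Gv T (t (bar e)) (η (bar e) (cast (hGe e).symm g)))⁻¹} ∪
  {x | ∃ (e : E) (he : e ∉ T) (g : Ge e),
      x = gogEin Gv T ⟨e, he⟩ * gogVin Gv T (t e) (η e g) * (gogEin Gv T ⟨e, he⟩)⁻¹ *
        (gogVin Gv T (t (bar e)) (η (bar e) (cast (hGe e).symm g)))⁻¹}

/-- The fundamental group of the graph of groups (with respect to the chosen
spanning tree `T`). -/
def GoGFund : Type :=
  GoGBase Gv T ⧸ Subgroup.normalClosure (gogRels bar t Gv Ge T η hGe)

instance : Group (GoGFund bar t Gv Ge T η hGe) :=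
  QuotientGroup.Quotient.group _

end GraphOfGroups

/-! ### Regular languages as finite right congruences -/

/-- The map `q` on words has the property that `q w` and `a` determine `q (w ++ [a])`; its fibres
are the classes of a right congruence, i.e. `q` is the state map of a deterministic automaton. -/
def RightCong {α σ : Type} (q : List α → σ) : Prop :=
  ∀ w w' a, q w = q w' → q (w ++ [a]) = q (w' ++ [a])

/-- The function `f` of a word factors through the state map of some finite deterministic
automaton. For `f` the membership predicate of a language this is regularity. -/
def FinObs {α β : Type} (f : List α → β) : Prop :=
  ∃ (σ : Type) (_ : Finite σ) (q : List α → σ), RightCong q ∧ ∀ w w', q w = q w' → f w = f w'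

theorem IsRegularLang.finObs {α : Type} {L : Set (List α)} (h : IsRegularLang L) :
    FinObs (fun w => w ∈ L) := by
  obtain ⟨σ, hσ, M, rfl⟩ := h
  refine ⟨σ, inferInstance, M.eval, ?_, ?_⟩
  · intro w w' a h
    simp [DFA.eval_append_singleton, h]
  · intro w w' h
    have : ∀ v, v ∈ (M.accepts : Set (List α)) ↔ M.eval v ∈ M.accept := fun v => Iff.rfl
    have e : M.eval w ∈ M.accept ↔ M.eval w' ∈ M.accept := by rw [h]
    exact propext ((this w).trans (e.trans (this w').symm))

theorem FinObs.isRegularLang {α : Type} {L : Set (List α)} (h : FinObs (fun w => w ∈ L)) :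
    IsRegularLang L := by
  classical
  obtain ⟨σ, hσ, q, hq, hL⟩ := h
  have := Fintype.ofFinite σ
  let M : DFA α σ :=
    { step := fun s a => if h : ∃ w, q w = s then q (h.choose ++ [a]) else s
      start := q []
      accept := {s | ∃ w, q w = s ∧ w ∈ L} }
  have hM : ∀ w, M.eval w = q w := by
    intro w
    induction w using List.reverseRecOn with
    | nil => rfl
    | append_singleton w a ih =>
      rw [DFA.eval_append_singleton, ih]
      have hex : ∃ v, q v = q w := ⟨w, rfl⟩
      change (if h : ∃ v, q v = q w then q (h.choose ++ [a]) else q w) = _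
      rw [dif_pos hex]
      exact hq _ _ _ hex.choose_spec
  refine ⟨σ, this, M, ?_⟩
  ext w
  change M.eval w ∈ M.accept ↔ _
  rw [hM]
  constructor
  · rintro ⟨v, hv, hvL⟩
    have := iff_of_eq (hL _ _ hv)
    exact this.mp hvL
  · intro hw
    exact ⟨w, rfl, hw⟩

theorem FinObs.pi {α ι : Type} [Finite ι] {β : ι → Type} {f : ∀ i, List α → β i}
    (h : ∀ i, FinObs (f i)) : FinObs (fun w i => f i w) := by
  choose σ hσ q hq hf using h
  refine ⟨∀ i, σ i, inferInstance, fun w i => q i w, ?_, ?_⟩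
  · intro w w' a h
    funext i
    exact hq i _ _ _ (congrFun h i)
  · intro w w' h
    funext i
    exact hf i _ _ (congrFun h i)

theorem FinObs.prod {α β γ : Type} {f : List α → β} {g : List α → γ}
    (hf : FinObs f) (hg : FinObs g) : FinObs (fun w => (f w, g w)) := by
  obtain ⟨σ, hσ, q, hq, h⟩ := hf
  obtain ⟨σ', hσ', q', hq', h'⟩ := hg
  refine ⟨σ × σ', inferInstance, fun w => (q w, q' w), ?_, ?_⟩
  · intro w w' a e
    simp only [Prod.mk.injEq] at e ⊢
    exact ⟨hq _ _ _ e.1, hq' _ _ _ e.2⟩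
  · intro w w' e
    simp only [Prod.mk.injEq] at e ⊢
    exact ⟨h _ _ e.1, h' _ _ e.2⟩

theorem FinObs.of_imp {α β γ : Type} {f : List α → β} {g : List α → γ} (hf : FinObs f)
    (h : ∀ w w', f w = f w' → g w = g w') : FinObs g := by
  obtain ⟨σ, hσ, q, hq, h'⟩ := hf
  exact ⟨σ, hσ, q, hq, fun w w' e => h _ _ (h' _ _ e)⟩

theorem RightCong.finObs {α σ : Type} [Finite σ] {q : List α → σ} (hq : RightCong q) : FinObs q :=
  ⟨σ, inferInstance, q, hq, fun _ _ h => h⟩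

theorem finObs_head? {α : Type} [Finite α] : FinObs (fun w : List α => w.head?) := by
  refine RightCong.finObs ?_
  intro w w' a h
  cases w <;> cases w' <;> simp_all

/-- A word remembered exactly as long as its length is at most `k`. -/
noncomputable def capWord {α : Type} (k : ℕ) (l : List α) : Option {l : List α // l.length ≤ k} :=
  open Classical in if h : l.length ≤ k then some ⟨l, h⟩ else none

theorem capWord_eq {α : Type} {k : ℕ} {l l' : List α} (h : capWord k l = capWord k l') :
    l = l' ∨ (k < l.length ∧ k < l'.length) := by
  unfold capWord at h
  split_ifs at h with h1 h2 h2
  · left; simpa using h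
  · right; omega

theorem capWord_append {α : Type} {k : ℕ} {l l' : List α} (u : List α)
    (h : capWord k l = capWord k l') : capWord k (l ++ u) = capWord k (l' ++ u) := by
  rcases capWord_eq h with rfl | ⟨h1, h2⟩
  · rfl
  · unfold capWord
    rw [dif_neg, dif_neg] <;> simp <;> omega

instance finite_capWord {α : Type} [Finite α] (k : ℕ) : Finite {l : List α // l.length ≤ k} :=
  (List.finite_length_le α k).to_subtype

/-! ### Padded triples -/

theorem padWord3_inj {α : Type} {p p' : List α × List α × List α}
    (h : padWord3 p = padWord3 p') : p = p' := by
  have key : ∀ (p : List α × List α × List α) (i : ℕ),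
      ((padWord3 p)[i]?).getD (none, none, none) = (p.1[i]?, p.2.1[i]?, p.2.2[i]?) := by
    intro p i
    unfold padWord3
    by_cases hi : i < max p.1.length (max p.2.1.length p.2.2.length)
    · simp [List.getElem?_range hi]
    · have h1 : p.1.length ≤ i := by omega
      have h2 : p.2.1.length ≤ i := by omega
      have h3 : p.2.2.length ≤ i := by omega
      simp [h1, h2, h3]
  obtain ⟨y, u, z⟩ := p
  obtain ⟨y', u', z'⟩ := p'
  have h2 : ∀ i : ℕ, ((y[i]?, u[i]?, z[i]?) : Option α × Option α × Option α) =
      (y'[i]?, u'[i]?, z'[i]?) := by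
    intro i
    have h1 := key (y, u, z) i
    rw [h, key] at h1
    exact h1.symm
  have e1 : y = y' := List.ext_getElem? fun i => by have := h2 i; simp_all
  have e2 : u = u' := List.ext_getElem? fun i => by have := h2 i; simp_all
  have e3 : z = z' := List.ext_getElem? fun i => by have := h2 i; simp_all
  subst e1 e2 e3; rfl

theorem padWord3_append {α : Type} {y u z : List α} (a : α) (hu : u.length ≤ y.length)
    (hz : z.length ≤ y.length) :
    padWord3 (y ++ [a], u, z) = padWord3 (y, u, z) ++ [(some a, none, none)] := by
  unfold padWord3
  have h1 : max (y ++ [a]).length (max u.length z.length) = y.length + 1 := by simp; omega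
  have h2 : max y.length (max u.length z.length) = y.length := by omega
  simp only [h1, h2, List.range_succ, List.map_append]
  congr 1
  · apply List.map_congr_left
    intro i hi
    rw [List.mem_range] at hi
    simp [List.getElem?_append_left hi]
  · simp [hu, hz]

/-- A synchronously regular graph of a bounded function: each value of the function can be read
off by a finite automaton running over the first argument only. -/
theorem SyncRegular3.finObs_phi {α : Type} [Finite α] {N : Set (List α)} {K : ℕ}
    {phi : List α → α → List α} (hK : ∀ y ∈ N, ∀ a, (phi y a).length ≤ K)
    (h : SyncRegular3 {t : List α × List α × List α | ∃ y ∈ N, ∃ a : α, t = (y, [a], phi y a)})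
    (a : α) : FinObs (fun w => {z | w ∈ N ∧ z = phi w a}) := by
  obtain ⟨σ, hσ, q, hq, hL⟩ := IsRegularLang.finObs h
  have hmem : ∀ w z, padWord3 (w, [a], z) ∈
      (padWord3 '' {t : List α × List α × List α | ∃ y ∈ N, ∃ a : α, t = (y, [a], phi y a)}) ↔
      (w ∈ N ∧ z = phi w a) := by
    intro w z
    constructor
    · rintro ⟨p, ⟨y, hy, b, rfl⟩, hp⟩
      have := padWord3_inj hp
      simp only [Prod.mk.injEq, List.cons.injEq, and_true] at this
      obtain ⟨rfl, rfl, rfl⟩ := this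
      exact ⟨hy, rfl⟩
    · rintro ⟨h1, rfl⟩
      exact ⟨_, ⟨w, h1, a, rfl⟩, rfl⟩
  -- for a fixed value `z`, words shorter than `[a]` or `z` are remembered exactly, and for longer
  -- words the state of the automaton for the graph is updated
  have hz : ∀ z : {l : List α // l.length ≤ K}, FinObs (fun w => (w ∈ N ∧ z.1 = phi w a)) := by
    rintro ⟨z, hzK⟩
    refine ⟨Option {l : List α // l.length ≤ K + 1} × σ, inferInstance,
      fun w => (capWord (K + 1) w, q (padWord3 (w, [a], z))), ?_, ?_⟩
    · intro w w' b e
      simp only [Prod.mk.injEq] at e ⊢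
      refine ⟨capWord_append _ e.1, ?_⟩
      rcases capWord_eq e.1 with rfl | ⟨h1, h2⟩
      · rfl
      · rw [padWord3_append, padWord3_append]
        · exact hq _ _ _ e.2
        all_goals first | omega | (simp only [List.length_singleton]; omega)
    · intro w w' e
      simp only [Prod.mk.injEq] at e
      have := hL _ _ e.2
      simp only [eq_iff_iff] at this
      rw [hmem, hmem] at this
      simpa using this
  refine FinObs.of_imp (FinObs.pi hz) ?_
  intro w w' e
  ext z
  simp only [Set.mem_ofPred_eq]
  constructor
  · rintro ⟨h1, h2⟩
    have := congrFun e ⟨z, h2 ▸ hK w h1 a⟩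
    simp only [eq_iff_iff] at this
    exact this.1 ⟨h1, h2⟩
  · rintro ⟨h1, h2⟩
    have := congrFun e ⟨z, h2 ▸ hK w' h1 a⟩
    simp only [eq_iff_iff] at this
    exact this.2 ⟨h1, h2⟩

/-- On one tape of a padded word, no letter follows a padding symbol. -/
def TapeOK {α : Type} (l : List (Option α)) : Prop :=
  l.Pairwise (fun a b => a = none → b = none)

theorem TapeOK.getElem? {α : Type} {l : List (Option α)} (h : TapeOK l) (i : ℕ) :
    l.reduceOption[i]? = (l[i]?).getD none := by
  induction l generalizing i with
  | nil => simp
  | cons a l ih =>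
    unfold TapeOK at h
    rw [List.pairwise_cons] at h
    cases a with
    | none =>
      have h1 : ∀ b ∈ l, b = none := fun b hb => h.1 b hb rfl
      have h2 : (none :: l).reduceOption = [] := by
        rw [List.reduceOption_cons_of_none]
        rw [← List.length_eq_zero_iff]
        by_contra hne
        obtain ⟨x, hx⟩ := List.exists_mem_of_length_pos (Nat.pos_of_ne_zero hne)
        rw [List.reduceOption_mem_iff] at hx
        exact absurd (h1 _ hx) (by simp)
      rw [h2]
      cases i with
      | zero => simp
      | succ i =>
        simp only [List.getElem?_nil, List.getElem?_cons_succ]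
        rcases hb : l[i]? with _ | b
        · rfl
        · simpa using (h1 b (List.mem_of_getElem? hb)).symm
    | some a =>
      rw [List.reduceOption_cons_of_some]
      cases i with
      | zero => simp
      | succ i => simpa using ih h.2 i

theorem tapeOK_padded {α : Type} (y : List α) (n : ℕ) :
    TapeOK ((List.range n).map (fun i => y[i]?)) := by
  unfold TapeOK
  rw [List.pairwise_map]
  refine List.Pairwise.imp ?_ (List.pairwise_lt_range (n := n))
  intro i j hij h
  rw [List.getElem?_eq_none_iff] at h ⊢
  omega

theorem reduceOption_padded {α : Type} (y : List α) (n : ℕ) (h : y.length ≤ n) :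
    ((List.range n).map (fun i => y[i]?)).reduceOption = y := by
  apply List.ext_getElem?
  intro i
  rw [(tapeOK_padded y n).getElem?]
  by_cases hi : i < n
  · simp [List.getElem?_range hi]
  · have : y.length ≤ i := by omega
    rw [List.getElem?_eq_none (by simpa using hi), List.getElem?_eq_none this]
    rfl

/-- The triple of words written on a three-tape word. -/
def unpad {α : Type} (W : List (Option α × Option α × Option α)) :
    List α × List α × List α :=
  ((W.map (fun b => b.1)).reduceOption, (W.map (fun b => b.2.1)).reduceOption,
    (W.map (fun b => b.2.2)).reduceOption)

/-- The conditions characterising padded words among all three-tape words. -/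
def PadOK {α : Type} (W : List (Option α × Option α × Option α)) : Prop :=
  TapeOK (W.map (fun b => b.1)) ∧ TapeOK (W.map (fun b => b.2.1)) ∧
    TapeOK (W.map (fun b => b.2.2)) ∧ (none, none, none) ∉ W

theorem padOK_padWord3 {α : Type} (p : List α × List α × List α) :
    PadOK (padWord3 p) ∧ unpad (padWord3 p) = p := by
  obtain ⟨y, u, z⟩ := p
  have e1 : (padWord3 (y, u, z)).map (fun b => b.1) =
    (List.range (max y.length (max u.length z.length))).map (fun i => y[i]?) := by
      simp [padWord3, Function.comp_def]
  have e2 : (padWord3 (y, u, z)).map (fun b => b.2.1) =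
    (List.range (max y.length (max u.length z.length))).map (fun i => u[i]?) := by
      simp [padWord3, Function.comp_def]
  have e3 : (padWord3 (y, u, z)).map (fun b => b.2.2) =
    (List.range (max y.length (max u.length z.length))).map (fun i => z[i]?) := by
      simp [padWord3, Function.comp_def]
  unfold PadOK unpad
  rw [e1, e2, e3]
  refine ⟨⟨tapeOK_padded _ _, tapeOK_padded _ _, tapeOK_padded _ _, ?_⟩, ?_⟩
  · simp [padWord3]
    intros; omega
  · rw [reduceOption_padded, reduceOption_padded, reduceOption_padded] <;> omega

theorem padWord3_unpad {α : Type} {W : List (Option α × Option α × Option α)} (h : PadOK W) :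
    padWord3 (unpad W) = W := by
  obtain ⟨h1, h2, h3, h4⟩ := h
  have hlen : max (unpad W).1.length (max (unpad W).2.1.length (unpad W).2.2.length)
      = W.length := by
    apply le_antisymm
    · have a1 := List.reduceOption_length_le (W.map (fun b => b.1))
      have a2 := List.reduceOption_length_le (W.map (fun b => b.2.1))
      have a3 := List.reduceOption_length_le (W.map (fun b => b.2.2))
      simp only [List.length_map] at a1 a2 a3
      simp only [unpad]
      omega
    · by_contra hlt
      push Not at hlt
      simp only [unpad] at hlt
      set n := max (List.map (fun b => b.1) W).reduceOption.length
        (max (List.map (fun b => b.2.1) W).reduceOption.length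
          (List.map (fun b => b.2.2) W).reduceOption.length) with hn
      apply h4
      have b1 := h1.getElem? n
      have b2 := h2.getElem? n
      have b3 := h3.getElem? n
      rw [List.getElem?_eq_none (by omega)] at b1 b2 b3
      simp only [List.getElem?_map, List.getElem?_eq_getElem hlt, Option.map_some,
        Option.getD_some] at b1 b2 b3
      have : W[n] = (none, none, none) := by
        ext1
        · exact b1.symm
        · ext1
          · exact b2.symm
          · exact b3.symm
      rw [← this]
      exact List.getElem_mem _
  unfold padWord3
  rw [hlen]
  apply List.ext_getElem
  · simp
  · intro i hi hi'
    have b1 := h1.getElem? i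
    have b2 := h2.getElem? i
    have b3 := h3.getElem? i
    simp only [List.getElem?_map, List.getElem?_eq_getElem hi', Option.map_some,
        Option.getD_some] at b1 b2 b3
    simp [unpad, b1, b2, b3]

/-- A tape condition and the presence of padding can be tracked letter by letter. -/
theorem tapeOK_append {α : Type} (l : List (Option α)) (b : Option α) :
    TapeOK (l ++ [b]) ↔ TapeOK l ∧ (none ∈ l → b = none) := by
  unfold TapeOK
  rw [List.pairwise_append]
  simp only [List.pairwise_singleton, List.mem_singleton, forall_eq, true_and]
  constructor
  · rintro ⟨h1, h2⟩; exact ⟨h1, fun h => h2 none h rfl⟩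
  · rintro ⟨h1, h2⟩; exact ⟨h1, fun a ha e => h2 (e ▸ ha)⟩

theorem finObs_tape {α β : Type} (f : β → Option α) :
    FinObs (fun W : List β => (TapeOK (W.map f), none ∈ W.map f)) := by
  refine RightCong.finObs ?_
  intro W W' b h
  simp only [Prod.mk.injEq, eq_iff_iff] at h
  simp only [List.map_append, List.map_cons, List.map_nil, tapeOK_append, List.mem_append, h.1, h.2]

theorem finObs_reduce {α β γ : Type} (f : β → Option α) {g : List α → γ} (hg : FinObs g) :
    FinObs (fun W : List β => g (W.map f).reduceOption) := by
  obtain ⟨σ, hσ, q, hq, h⟩ := hg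
  refine ⟨σ, hσ, fun W => q (W.map f).reduceOption, ?_, fun w w' e => h _ _ e⟩
  intro W W' b e
  simp only [List.map_append, List.map_cons, List.map_nil, List.reduceOption_append] at e ⊢
  cases f b with
  | none => simpa using e
  | some a => simpa using hq _ _ a e

theorem finObs_capWord {α : Type} [Finite α] (k : ℕ) : FinObs (capWord k : List α → _) :=
  RightCong.finObs fun _ _ _ h => capWord_append _ h

/-- Conversely, a bounded function whose values are read off by finite automata has a
synchronously regular graph. -/
theorem syncRegular3_of_finObs {α : Type} [Finite α] {N : Set (List α)} {K : ℕ}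
    {phi : List α → α → List α} (hK : ∀ y ∈ N, ∀ a, (phi y a).length ≤ K)
    (h : FinObs (fun w a => {z | w ∈ N ∧ z = phi w a})) :
    SyncRegular3 {t : List α × List α × List α | ∃ y ∈ N, ∃ a : α, t = (y, [a], phi y a)} := by
  apply FinObs.isRegularLang
  have hmem : ∀ W, W ∈ (padWord3 ''
      {t : List α × List α × List α | ∃ y ∈ N, ∃ a : α, t = (y, [a], phi y a)}) ↔
      PadOK W ∧ ∃ a, (unpad W).2.1 = [a] ∧ (unpad W).1 ∈ N ∧
        (unpad W).2.2 = phi (unpad W).1 a := by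
    intro W
    constructor
    · rintro ⟨p, ⟨y, hy, a, rfl⟩, rfl⟩
      obtain ⟨h1, h2⟩ := padOK_padWord3 (y, [a], phi y a)
      refine ⟨h1, a, ?_⟩
      rw [h2]
      exact ⟨rfl, hy, rfl⟩
    · rintro ⟨h1, a, h2, h3, h4⟩
      refine ⟨unpad W, ⟨_, h3, a, ?_⟩, padWord3_unpad h1⟩
      rw [← h2, ← h4]
  have hnone : FinObs (fun W : List (Option α × Option α × Option α) =>
      ((none, none, none) ∈ W)) := by
    refine RightCong.finObs ?_
    intro W W' b e
    simp only [eq_iff_iff] at e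
    simp [e]
  refine FinObs.of_imp ((finObs_tape (fun b : Option α × Option α × Option α => b.1)).prod
    ((finObs_tape (fun b : Option α × Option α × Option α => b.2.1)).prod
    ((finObs_tape (fun b : Option α × Option α × Option α => b.2.2)).prod
    (hnone.prod ((finObs_reduce (fun b : Option α × Option α × Option α => b.1) h).prod
    ((finObs_reduce (fun b : Option α × Option α × Option α => b.2.1) (finObs_capWord 1)).prod
    (finObs_reduce (fun b : Option α × Option α × Option α => b.2.2) (finObs_capWord K)))))))) ?_
  intro W W' e
  simp only [Prod.mk.injEq, eq_iff_iff] at e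
  obtain ⟨⟨a1, -⟩, ⟨a2, -⟩, ⟨a3, -⟩, a4, a5, a6, a7⟩ := e
  simp only [eq_iff_iff]
  rw [hmem, hmem]
  have hpad : PadOK W ↔ PadOK W' := by simp only [PadOK, a1, a2, a3, a4]
  rw [hpad]
  refine and_congr_right fun _ => exists_congr fun a => ?_
  have hu : (unpad W).2.1 = [a] ↔ (unpad W').2.1 = [a] := by
    rcases capWord_eq a6 with e | ⟨e1, e2⟩
    · simp only [unpad, e]
    · constructor
      · intro hh; simp only [unpad] at hh; rw [hh] at e1; simp at e1
      · intro hh; simp only [unpad] at hh; rw [hh] at e2; simp at e2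
  rw [hu]
  refine and_congr_right fun _ => ?_
  have hset : ∀ z, ((unpad W).1 ∈ N ∧ z = phi (unpad W).1 a) ↔
      ((unpad W').1 ∈ N ∧ z = phi (unpad W').1 a) := fun z =>
    Set.ext_iff.1 (congrFun a5 a) z
  rw [hset]
  refine and_congr_right fun hN => ?_
  rcases capWord_eq a7 with e | ⟨e1, e2⟩
  · simp only [unpad, e]
  · have hb := hK _ hN a
    constructor
    · intro hh; rw [← hh] at hb; simp only [unpad] at hb; omega
    · intro hh; rw [← hh] at hb; simp only [unpad] at hb; omega

/-! ### Graphs of groups inside a group, and syllable normal forms -/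

/-- A graph of groups realised inside its fundamental group `Γ`, together with a system of
right transversals given by words. The index `none : Option E` stands for the base vertex, which is
treated like an extra edge with trivial edge group. `Gs v` are the vertex groups, `s e` the stable
letters (trivial on the spanning tree `T`), `H j` the edge groups, `NTr j` transversal words for
`H j`, and `phi` the stacking map of the vertex groups, read on transversal words. -/
structure GraphData (Γ V E α : Type) [Group Γ] where
  bar : E → E
  t : E → V
  T : Set E
  v0 : V
  Gs : V → Subgroup Γ
  s : E → Γ
  H : Option E → Subgroup Γ
  lab : α → Option E
  π : α → Γ
  inv : α → α
  NTr : Option E → Set (List α)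
  phi : α → List α → List α
  B : Set α
  K : ℕ
  bar_nT : ∀ e, e ∉ T → bar e ∉ T

namespace GraphData

variable {Γ V E α : Type} [Group Γ] (D : GraphData Γ V E α)

/-- The terminal vertex of an extended edge. -/
def tt : Option E → V
  | none => D.v0
  | some e => D.t e

/-- The element of `Γ` belonging to an extended edge. -/
def sj : Option E → Γ
  | none => 1
  | some e => D.s e

/-- The generating set of `Γ`: the letters of all vertex groups and the edges outside the tree. -/
abbrev Letter : Type := α ⊕ {e : E // e ∉ D.T}

/-- The values of the letters. -/
def val : D.Letter → Γ := Sum.elim D.π (fun e => D.s e.1)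

/-- The formal inverse of a letter. -/
def linv : D.Letter → D.Letter :=
  Sum.map D.inv (fun e => ⟨D.bar e.1, D.bar_nT e.1 e.2⟩)

/-- The word (empty for tree edges) spelling an extended edge. -/
noncomputable def ltr : Option E → List D.Letter
  | none => []
  | some e => open Classical in if h : e ∈ D.T then [] else [Sum.inr ⟨e, h⟩]

/-- Reduced syllable sequences, the most recent syllable first: the bottom syllable belongs to
the base vertex, consecutive edges match, and a trivial syllable is not followed by the reverse of
its edge. -/
inductive Valid : List (Option E × List α) → Prop
  | base (τ : List α) : τ ∈ D.NTr none → Valid [(none, τ)]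
  | cons (e : E) (τ : List α) (j : Option E) (τ' : List α) (r : List (Option E × List α)) :
      Valid ((j, τ') :: r) → D.tt j = D.t (D.bar e) → τ ∈ D.NTr (some e) →
      ¬ (j = some (D.bar e) ∧ τ' = []) → Valid ((some e, τ) :: (j, τ') :: r)

/-- The vertex at which a syllable sequence ends. -/
def endV : List (Option E × List α) → V
  | [] => D.v0
  | (j, _) :: _ => D.tt j

/-- The element of `Γ` represented by a syllable sequence. -/
def sval : List (Option E × List α) → Γ
  | [] => 1
  | (j, τ) :: r => sval r * D.sj j * wordVal D.π τ

/-- The word spelled by a syllable sequence. -/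
noncomputable def word : List (Option E × List α) → List D.Letter
  | [] => []
  | (j, τ) :: r => word r ++ D.ltr j ++ τ.map Sum.inl

/-- One step of the stacking reduction in a vertex group, recorded on group elements. -/
def Step (q p : Γ × α) : Prop :=
  ∃ τ ∈ D.NTr (D.lab p.2), wordVal D.π τ * p.1⁻¹ ∈ D.H (D.lab p.2) ∧ ¬ (τ = [] ∧ p.2 ∈ D.B) ∧
    τ ++ [p.2] ∉ D.NTr (D.lab p.2) ∧ (¬ ∃ τ', τ = τ' ++ [D.inv p.2]) ∧
    ∃ u u', D.phi p.2 τ = u ++ q.2 :: u' ∧ q.1 = p.1 * wordVal D.π u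

/-- The properties of the data of a graph of groups with autostackable vertex groups. The field
`uniq` is the normal form theorem of Bass-Serre theory. -/
structure Good : Prop where
  bar_bar : ∀ e, D.bar (D.bar e) = e
  bar_T : ∀ e ∈ D.T, D.bar e ∈ D.T
  s_T : ∀ e ∈ D.T, D.s e = 1
  s_bar : ∀ e, D.s (D.bar e) = (D.s e)⁻¹
  tree : ∀ u v, ∃ p : List E, (∀ e ∈ p, e ∈ D.T) ∧
    IsEdgePath (fun e => D.t (D.bar e)) D.t u p v ∧ List.IsChain (fun e f => f ≠ D.bar e) p
  gen : Subgroup.closure (Set.range D.π ∪ Set.range D.s) = ⊤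
  π_ne : ∀ a, D.π a ≠ 1
  inv_inv : ∀ a, D.inv (D.inv a) = a
  π_inv : ∀ a, D.π (D.inv a) = (D.π a)⁻¹
  lab_inv : ∀ a, D.lab (D.inv a) = D.lab a
  π_mem : ∀ a, D.π a ∈ D.Gs (D.tt (D.lab a))
  H_none : D.H none = ⊥
  H_le : ∀ j, D.H j ≤ D.Gs (D.tt j)
  conj : ∀ e, ∀ h ∈ D.H (some e), D.s e * h * (D.s e)⁻¹ ∈ D.H (some (D.bar e))
  NTr_lab : ∀ j, ∀ w ∈ D.NTr j, ∀ b ∈ w, D.lab b = j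
  NTr_closed : ∀ j, PrefixClosed (D.NTr j)
  NTr_rep : ∀ j, ∀ g ∈ D.Gs (D.tt j), ∃ w ∈ D.NTr j, wordVal D.π w * g⁻¹ ∈ D.H j
  NTr_uniq : ∀ j, ∀ w ∈ D.NTr j, ∀ w' ∈ D.NTr j,
    wordVal D.π w * (wordVal D.π w')⁻¹ ∈ D.H j → w = w'
  B_H : ∀ a ∈ D.B, D.π a ∈ D.H (D.lab a)
  words : ∀ j, ∀ g ∈ D.Gs (D.tt j), ∃ w, (∀ b ∈ w, D.lab b = j) ∧ wordVal D.π w = g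
  phi_lab : ∀ a, ∀ τ ∈ D.NTr (D.lab a), ∀ c ∈ D.phi a τ, D.lab c = D.lab a
  phi_val : ∀ a, ∀ τ ∈ D.NTr (D.lab a), wordVal D.π (D.phi a τ) = D.π a
  phi_len : ∀ a, ∀ τ ∈ D.NTr (D.lab a), (D.phi a τ).length ≤ D.K
  phi_F2 : ∀ a, ∀ τ ∈ D.NTr (D.lab a), (τ ++ [a] ∈ D.NTr (D.lab a) ∨ ∃ τ', τ = τ' ++ [D.inv a]) →
    D.phi a τ = [a]
  acc : ∀ a, ∀ g ∈ D.Gs (D.tt (D.lab a)), Acc D.Step (g, a)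
  reg : FinObs (fun w => ((fun j => w ∈ D.NTr j : Option E → Prop),
    fun a => {z | w ∈ D.NTr (D.lab a) ∧ z = D.phi a w}))
  uniq : ∀ x x', D.Valid x → D.Valid x' → D.endV x = D.endV x' → D.sval x = D.sval x' → x = x'

end GraphData

theorem wordVal_append {G : Type} [Monoid G] {α : Type} (π : α → G) (u v : List α) :
    wordVal π (u ++ v) = wordVal π u * wordVal π v := by
  simp [wordVal]

theorem wordVal_nil {G : Type} [Monoid G] {α : Type} (π : α → G) : wordVal π [] = 1 := rfl

theorem wordVal_singleton {G : Type} [Monoid G] {α : Type} (π : α → G) (a : α) :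
    wordVal π [a] = π a := by
  simp [wordVal]

theorem wordVal_mem {G : Type} [Group G] {α : Type} (π : α → G) (S : Subgroup G) (w : List α)
    (h : ∀ b ∈ w, π b ∈ S) : wordVal π w ∈ S := by
  apply Subgroup.list_prod_mem
  intro x hx
  obtain ⟨b, hb, rfl⟩ := List.mem_map.1 hx
  exact h b hb

namespace GraphData

variable {Γ V E α : Type} [Group Γ] {D : GraphData Γ V E α}

theorem Valid.mem {j τ r} (h : D.Valid ((j, τ) :: r)) : τ ∈ D.NTr j := by
  cases h <;> assumption

theorem Valid.ne_nil {x} (h : D.Valid x) : ∃ j τ r, x = (j, τ) :: r := by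
  cases h <;> exact ⟨_, _, _, rfl⟩

theorem Valid.tail {e τ r} (h : D.Valid ((some e, τ) :: r)) :
    ∃ j τ' r', r = (j, τ') :: r' ∧ D.Valid r ∧ D.tt j = D.t (D.bar e) ∧
      ¬ (j = some (D.bar e) ∧ τ' = []) := by
  cases h
  exact ⟨_, _, _, rfl, by assumption, by assumption, by assumption⟩

theorem Valid.tail_none {τ r} (h : D.Valid ((none, τ) :: r)) : r = [] := by
  cases h; rfl

theorem Valid.replace {j τ τ' r} (h : D.Valid ((j, τ) :: r)) (hτ : τ' ∈ D.NTr j) :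
    D.Valid ((j, τ') :: r) := by
  cases h with
  | base _ _ => exact .base _ hτ
  | cons _ _ _ _ _ h1 h2 h3 h4 => exact .cons _ _ _ _ _ h1 h2 hτ h4

theorem ltr_T {e : E} (h : e ∈ D.T) : D.ltr (some e) = [] := by
  simp [ltr, h]

theorem ltr_nT {e : E} (h : e ∉ D.T) : D.ltr (some e) = [Sum.inr ⟨e, h⟩] := by
  simp [ltr, h]

theorem wordVal_inl (w : List α) :
    wordVal D.val (w.map Sum.inl : List D.Letter) = wordVal D.π w := by
  simp [wordVal, val, Function.comp_def]

namespace Good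

variable (hD : D.Good)
include hD

theorem val_ltr (j : Option E) : wordVal D.val (D.ltr j) = D.sj j := by
  cases j with
  | none => rfl
  | some e =>
    by_cases h : e ∈ D.T
    · rw [ltr_T h]; exact (hD.s_T e h).symm
    · rw [ltr_nT h]; simp [wordVal, val, sj]

theorem val_word (x) : wordVal D.val (D.word x) = D.sval x := by
  induction x with
  | nil => rfl
  | cons p r ih =>
    obtain ⟨j, τ⟩ := p
    simp only [word, sval, wordVal_append, ih, hD.val_ltr, wordVal_inl]

theorem nil_mem (j) : [] ∈ D.NTr j := by
  obtain ⟨w, hw, -⟩ := hD.NTr_rep j 1 (one_mem _)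
  exact hD.NTr_closed j w hw [] ⟨w, rfl⟩

theorem wordVal_mem_of_lab {j} {w : List α} (h : ∀ b ∈ w, D.lab b = j) :
    wordVal D.π w ∈ D.Gs (D.tt j) :=
  wordVal_mem _ _ _ fun b hb => h b hb ▸ hD.π_mem b

theorem NTr_val_mem {j τ} (h : τ ∈ D.NTr j) : wordVal D.π τ ∈ D.Gs (D.tt j) :=
  hD.wordVal_mem_of_lab (hD.NTr_lab j τ h)

theorem nil_of_mem_H {j τ} (h : τ ∈ D.NTr j) (hH : wordVal D.π τ ∈ D.H j) : τ = [] :=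
  hD.NTr_uniq j τ h [] (hD.nil_mem j) (by simpa [wordVal_nil] using hH)

/-- A vertex group acts on the reduced sequences ending at its vertex without changing the
sequence of edges. -/
theorem exists_act {x} (hx : D.Valid x) : ∀ j τ r, x = (j, τ) :: r → ∀ g ∈ D.Gs (D.tt j),
    ∃ τ' r', D.Valid ((j, τ') :: r') ∧ D.sval ((j, τ') :: r') = D.sval ((j, τ) :: r) * g ∧
      r'.map Prod.fst = r.map Prod.fst ∧ wordVal D.π τ * g * (wordVal D.π τ')⁻¹ ∈ D.H j := by
  induction hx with
  | base τ hτ =>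
    rintro j τ r ⟨rfl, rfl⟩ g hg
    obtain ⟨τ', hτ', hH⟩ := hD.NTr_rep none (wordVal D.π τ * g) (mul_mem (hD.NTr_val_mem hτ) hg)
    have hH' := hH
    rw [hD.H_none, Subgroup.mem_bot, mul_inv_eq_one] at hH'
    refine ⟨τ', [], .base _ hτ', ?_, rfl, ?_⟩
    · simp [sval, hH', mul_assoc]
    · rw [hH', mul_inv_cancel]; exact one_mem _
  | cons e τ j τ2 r hr hj hτ hred ih =>
    rintro _ _ _ ⟨rfl, rfl⟩ g hg
    obtain ⟨τ', hτ', hH⟩ := hD.NTr_rep (some e) (wordVal D.π τ * g)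
      (mul_mem (hD.NTr_val_mem hτ) hg)
    set h := wordVal D.π τ * g * (wordVal D.π τ')⁻¹ with hh
    have hmem : h ∈ D.H (some e) := by
      have := inv_mem hH
      simpa [hh, mul_assoc] using this
    have hc := hD.conj e h hmem
    have hc' : D.s e * h * (D.s e)⁻¹ ∈ D.Gs (D.tt j) := by
      rw [hj]; exact hD.H_le _ hc
    obtain ⟨τ2', r', hv, hs, hm, hHH⟩ := ih j τ2 r rfl _ hc'
    refine ⟨τ', (j, τ2') :: r', .cons _ _ _ _ _ hv hj hτ' ?_, ?_, ?_, hmem⟩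
    · rintro ⟨rfl, rfl⟩
      refine hred ⟨rfl, hD.nil_of_mem_H hr.mem ?_⟩
      rw [wordVal_nil, inv_one, mul_one] at hHH
      have := mul_mem hHH (inv_mem hc)
      rwa [mul_inv_cancel_right] at this
    · have e1 : D.sval ((some e, τ') :: (j, τ2') :: r') =
        D.sval ((j, τ2') :: r') * D.s e * wordVal D.π τ' := rfl
      have e2 : D.sval ((some e, τ) :: (j, τ2) :: r) =
        D.sval ((j, τ2) :: r) * D.s e * wordVal D.π τ := rfl
      rw [e1, e2, hs, hh]
      group
    · simp [hm]

/-- Right multiplication by a stable letter adds an edge or cancels one. -/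
theorem exists_edge {j τ r} (hx : D.Valid ((j, τ) :: r)) (e : E) (hj : D.tt j = D.t (D.bar e)) :
    ∃ x', D.Valid x' ∧ D.endV x' = D.t e ∧ D.sval x' = D.sval ((j, τ) :: r) * D.s e ∧
      ((¬ (j = some (D.bar e) ∧ τ = []) ∧ x' = (some e, []) :: (j, τ) :: r) ∨
        (j = some (D.bar e) ∧ τ = [] ∧ x' = r)) := by
  by_cases h : j = some (D.bar e) ∧ τ = []
  · obtain ⟨rfl, rfl⟩ := h
    obtain ⟨j', τ', r', rfl, hv, hj', -⟩ := hx.tail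
    refine ⟨_, hv, ?_, ?_, Or.inr ⟨rfl, rfl, rfl⟩⟩
    · rw [hD.bar_bar] at hj'; exact hj'
    · have : D.sval ((some (D.bar e), []) :: (j', τ') :: r') =
        D.sval ((j', τ') :: r') * D.s (D.bar e) * 1 := rfl
      rw [this, hD.s_bar]; group
  · refine ⟨_, .cons e [] j τ r hx hj (hD.nil_mem _) h, rfl, ?_, Or.inl ⟨h, rfl⟩⟩
    have : D.sval ((some e, []) :: (j, τ) :: r) = D.sval ((j, τ) :: r) * D.s e * 1 := rfl
    rw [this, mul_one]

theorem exists_transport (p : List E) : ∀ u v x, IsEdgePath (fun e => D.t (D.bar e)) D.t u p v →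
    (∀ e ∈ p, e ∈ D.T) → D.Valid x → D.endV x = u →
    ∃ x', D.Valid x' ∧ D.endV x' = v ∧ D.sval x' = D.sval x ∧ D.word x' = D.word x := by
  induction p with
  | nil => rintro u v x rfl _ hx rfl; exact ⟨x, hx, rfl, rfl, rfl⟩
  | cons e p ih =>
    rintro u v x ⟨hu, hp⟩ hT hx hxu
    obtain ⟨j, τ, r, rfl⟩ := hx.ne_nil
    have hju : D.tt j = D.t (D.bar e) := hxu.trans hu.symm
    have heT := hT e (by simp)
    obtain ⟨x', hv, he, hs, hc⟩ := hD.exists_edge hx e hju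
    obtain ⟨x'', hv', he', hs', hw'⟩ := ih (D.t e) v x' hp
      (fun f hf => hT f (List.mem_cons_of_mem _ hf)) hv he
    refine ⟨x'', hv', he', by rw [hs', hs, hD.s_T e heT, mul_one], ?_⟩
    rw [hw']
    rcases hc with ⟨-, rfl⟩ | ⟨rfl, rfl, rfl⟩
    · change D.word ((j, τ) :: r) ++ D.ltr (some e) ++ [] = _
      rw [ltr_T heT]; simp
    · change _ = D.word x' ++ D.ltr (some (D.bar e)) ++ []
      rw [ltr_T (hD.bar_T e heT)]; simp

theorem word_eq {x x'} (hx : D.Valid x) (hx' : D.Valid x') (h : D.sval x = D.sval x') :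
    D.word x = D.word x' := by
  obtain ⟨p, hT, hp, -⟩ := hD.tree (D.endV x) (D.endV x')
  obtain ⟨x'', h1, h2, h3, h4⟩ := hD.exists_transport p _ _ x hp hT hx rfl
  rw [← h4, hD.uniq x'' x' h1 hx' h2 (h3.trans h)]

theorem exists_nf (γ : Γ) : ∀ v, ∃ x, D.Valid x ∧ D.endV x = v ∧ D.sval x = γ := by
  have key : ∀ γ, (∃ x, D.Valid x ∧ D.sval x = γ) →
      ∀ v, ∃ x, D.Valid x ∧ D.endV x = v ∧ D.sval x = γ := by
    rintro γ ⟨x, hx, rfl⟩ v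
    obtain ⟨p, hT, hp, -⟩ := hD.tree (D.endV x) v
    obtain ⟨x', h1, h2, h3, -⟩ := hD.exists_transport p _ _ x hp hT hx rfl
    exact ⟨x', h1, h2, h3⟩
  have hG : ∀ γ v, ∀ g ∈ D.Gs (D.tt v), (∃ x, D.Valid x ∧ D.sval x = γ) →
      ∃ x, D.Valid x ∧ D.sval x = γ * g := by
    rintro γ v g hg h
    obtain ⟨x, hx, he, rfl⟩ := key γ h (D.tt v)
    obtain ⟨j, τ, r, rfl⟩ := hx.ne_nil
    have he' : D.tt j = D.tt v := he
    obtain ⟨τ', r', h1, h2, -⟩ := hD.exists_act hx j τ r rfl g (he' ▸ hg)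
    exact ⟨_, h1, h2⟩
  have hS : ∀ γ e, (∃ x, D.Valid x ∧ D.sval x = γ) → ∃ x, D.Valid x ∧ D.sval x = γ * D.s e := by
    rintro γ e h
    obtain ⟨x, hx, he, rfl⟩ := key γ h (D.t (D.bar e))
    obtain ⟨j, τ, r, rfl⟩ := hx.ne_nil
    obtain ⟨x', h1, -, h2, -⟩ := hD.exists_edge hx e he
    exact ⟨_, h1, h2⟩
  apply key
  have hγ : γ ∈ Subgroup.closure (Set.range D.π ∪ Set.range D.s) := by
    rw [hD.gen]; trivial
  induction hγ using Subgroup.closure_induction_right with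
  | one => exact ⟨[(none, [])], .base _ (hD.nil_mem _), by simp [sval, sj, wordVal_nil]⟩
  | mul_right γ hγ y hy ih =>
    rcases hy with ⟨a, rfl⟩ | ⟨e, rfl⟩
    · exact hG γ _ _ (hD.π_mem a) ih
    · exact hS γ e ih
  | mul_inv_cancel γ hγ y hy ih =>
    rcases hy with ⟨a, rfl⟩ | ⟨e, rfl⟩
    · exact hG γ _ _ (inv_mem (hD.π_mem a)) ih
    · rw [← hD.s_bar]; exact hS γ _ ih

end Good

open Classical in
/-- The reduced syllable sequence for `γ` ending at `v`. -/
noncomputable def nfx (D : GraphData Γ V E α) (γ : Γ) (v : V) : List (Option E × List α) :=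
  if h : ∃ x, D.Valid x ∧ D.endV x = v ∧ D.sval x = γ then h.choose else []

/-- The normal forms of `Γ`. -/
def NF (D : GraphData Γ V E α) : Set (List D.Letter) := {w | ∃ x, D.Valid x ∧ D.word x = w}

namespace Good

variable (hD : D.Good)
include hD

theorem nfx_spec (γ : Γ) (v : V) :
    D.Valid (D.nfx γ v) ∧ D.endV (D.nfx γ v) = v ∧ D.sval (D.nfx γ v) = γ := by
  have h := hD.exists_nf γ v
  unfold nfx
  rw [dif_pos h]
  exact h.choose_spec

theorem nfx_eq {x γ v} (hx : D.Valid x) (hv : D.endV x = v) (hγ : D.sval x = γ) :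
    D.nfx γ v = x := by
  obtain ⟨h1, h2, h3⟩ := hD.nfx_spec γ v
  exact hD.uniq _ _ h1 hx (h2.trans hv.symm) (h3.trans hγ.symm)

theorem word_nfx {y} (hy : y ∈ D.NF) (v : V) : D.word (D.nfx (wordVal D.val y) v) = y := by
  obtain ⟨x, hx, rfl⟩ := hy
  obtain ⟨h1, h2, h3⟩ := hD.nfx_spec (wordVal D.val (D.word x)) v
  exact hD.word_eq h1 hx (h3.trans (hD.val_word x))

theorem NF_unique (g : Γ) : ∃! w, w ∈ D.NF ∧ wordVal D.val w = g := by
  obtain ⟨x, hx, -, rfl⟩ := hD.exists_nf g D.v0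
  refine ⟨D.word x, ⟨⟨x, hx, rfl⟩, hD.val_word x⟩, ?_⟩
  rintro w ⟨⟨x', hx', rfl⟩, h⟩
  rw [hD.val_word] at h
  exact hD.word_eq hx' hx h

/-- The last letter of a normal form determines the top syllable of a suitable syllable
sequence spelling it. -/
theorem last_letter {z} (hz : D.Valid z) : ∀ y b, D.word z = y ++ [b] →
    ∃ j τ r, D.Valid ((j, τ) :: r) ∧ D.word ((j, τ) :: r) = y ++ [b] ∧
      ((∃ a τ0, b = Sum.inl a ∧ j = D.lab a ∧ τ = τ0 ++ [a]) ∨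
        (∃ e, b = Sum.inr e ∧ j = some e.1 ∧ τ = [])) := by
  have main : ∀ j τ r, D.Valid ((j, τ) :: r) → τ ≠ [] → ∀ y b, D.word ((j, τ) :: r) = y ++ [b] →
      ∃ a τ0, b = Sum.inl a ∧ j = D.lab a ∧ τ = τ0 ++ [a] := by
    intro j τ r hv hτ y b hw
    obtain ⟨τ0, a, rfl⟩ := List.eq_nil_or_concat' τ |>.resolve_left hτ
    refine ⟨a, τ0, ?_, (hD.NTr_lab j _ hv.mem a (by simp)).symm, rfl⟩
    simp only [word, List.map_append, List.map_cons, List.map_nil, ← List.append_assoc] at hw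
    have := (List.append_inj' hw rfl).2
    simpa using this.symm
  induction hz with
  | base τ hτ =>
    intro y b hw
    by_cases hne : τ = []
    · subst hne; simp [word, ltr] at hw
    · exact ⟨none, τ, [], .base _ hτ, hw, Or.inl (main _ _ _ (.base _ hτ) hne y b hw)⟩
  | cons e τ j τ' r hr hj hτ hred ih =>
    intro y b hw
    have hv : D.Valid ((some e, τ) :: (j, τ') :: r) := .cons _ _ _ _ _ hr hj hτ hred
    by_cases hne : τ = []
    · subst hne
      by_cases he : e ∈ D.T
      · have : D.word ((some e, []) :: (j, τ') :: r) = D.word ((j, τ') :: r) := by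
          change D.word ((j, τ') :: r) ++ D.ltr (some e) ++ [] = _
          rw [ltr_T he]; simp
        exact ih y b (this ▸ hw)
      · refine ⟨_, _, _, hv, hw, Or.inr ⟨⟨e, he⟩, ?_, rfl, rfl⟩⟩
        change D.word ((j, τ') :: r) ++ D.ltr (some e) ++ [] = _ at hw
        rw [ltr_nT he, List.append_nil] at hw
        have := (List.append_inj' hw rfl).2
        simpa using this.symm
    · exact ⟨_, _, _, hv, hw, Or.inl (main _ _ _ hv hne y b hw)⟩

omit hD in
theorem word_snoc (j τ a r) : D.word ((j, τ ++ [a]) :: r) = D.word ((j, τ) :: r) ++ [Sum.inl a] := by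
  simp [word]

/-- When a vertex letter extends a normal form. -/
theorem step_inl {y} (hy : y ∈ D.NF) (a : α) {j τ r}
    (hx : D.nfx (wordVal D.val y) (D.tt (D.lab a)) = (j, τ) :: r) :
    (y ++ [Sum.inl a] ∈ D.NF ↔ j = D.lab a ∧ τ ++ [a] ∈ D.NTr j) ∧
    (y ++ [Sum.inl a] ∈ D.NF → D.Valid ((j, τ ++ [a]) :: r) ∧
      D.word ((j, τ ++ [a]) :: r) = y ++ [Sum.inl a]) := by
  obtain ⟨h1, h2, h3⟩ := hD.nfx_spec (wordVal D.val y) (D.tt (D.lab a))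
  have hw := hD.word_nfx hy (D.tt (D.lab a))
  rw [hx] at h1 h2 h3 hw
  have key : y ++ [Sum.inl a] ∈ D.NF → j = D.lab a ∧ τ ++ [a] ∈ D.NTr j := by
    rintro ⟨z, hz, hzw⟩
    obtain ⟨j', τ', r', hv, hw', h⟩ := hD.last_letter hz _ _ hzw
    rcases h with ⟨a', τ0, ha, rfl, rfl⟩ | ⟨e, he, -⟩
    · obtain rfl : a = a' := by simpa using ha
      rw [word_snoc] at hw'
      have hw0 := (List.append_inj' hw' rfl).1
      have hv0 : D.Valid ((D.lab a, τ0) :: r') :=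
        hv.replace (hD.NTr_closed _ _ hv.mem _ (List.prefix_append _ _))
      have := hD.nfx_eq hv0 (v := D.tt (D.lab a)) rfl (γ := wordVal D.val y)
        (by rw [← hD.val_word, hw0])
      rw [hx] at this
      obtain ⟨⟨rfl, rfl⟩, rfl⟩ : (j = D.lab a ∧ τ = τ0) ∧ r = r' := by simpa using this
      exact ⟨rfl, hv.mem⟩
    · simp at he
  have back : j = D.lab a ∧ τ ++ [a] ∈ D.NTr j → D.Valid ((j, τ ++ [a]) :: r) ∧
      D.word ((j, τ ++ [a]) :: r) = y ++ [Sum.inl a] := by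
    rintro ⟨-, h⟩
    exact ⟨h1.replace h, by rw [word_snoc, hw]⟩
  exact ⟨⟨key, fun h => ⟨_, back h⟩⟩, fun h => back (key h)⟩

/-- When an edge letter extends a normal form. -/
theorem step_inr {y} (hy : y ∈ D.NF) (e : {e : E // e ∉ D.T}) {j τ r}
    (hx : D.nfx (wordVal D.val y) (D.t (D.bar e.1)) = (j, τ) :: r) :
    (y ++ [Sum.inr e] ∈ D.NF ↔ ¬ (j = some (D.bar e.1) ∧ τ = [])) ∧
    (y ++ [Sum.inr e] ∈ D.NF → D.Valid ((some e.1, []) :: (j, τ) :: r) ∧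
      D.word ((some e.1, []) :: (j, τ) :: r) = y ++ [Sum.inr e]) := by
  obtain ⟨h1, h2, h3⟩ := hD.nfx_spec (wordVal D.val y) (D.t (D.bar e.1))
  have hw := hD.word_nfx hy (D.t (D.bar e.1))
  rw [hx] at h1 h2 h3 hw
  have hword : ∀ x, D.word ((some e.1, []) :: x) = D.word x ++ [Sum.inr e] := by
    intro x
    change D.word x ++ D.ltr (some e.1) ++ [] = _
    rw [ltr_nT e.2, List.append_nil]
  have key : y ++ [Sum.inr e] ∈ D.NF → ¬ (j = some (D.bar e.1) ∧ τ = []) := by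
    rintro ⟨z, hz, hzw⟩
    obtain ⟨j', τ', r', hv, hw', h⟩ := hD.last_letter hz _ _ hzw
    rcases h with ⟨a', τ0, ha, -⟩ | ⟨e', he, rfl, rfl⟩
    · simp at ha
    · obtain rfl : e = e' := by simpa using he
      rw [hword] at hw'
      have hw0 := (List.append_inj' hw' rfl).1
      obtain ⟨j2, τ2, r2, rfl, hv2, hj2, hred⟩ := hv.tail
      have := hD.nfx_eq hv2 (v := D.t (D.bar e.1)) hj2 (γ := wordVal D.val y)
        (by rw [← hD.val_word, hw0])
      rw [hx] at this
      obtain ⟨⟨rfl, rfl⟩, rfl⟩ : (j = j2 ∧ τ = τ2) ∧ r = r2 := by simpa using this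
      exact hred
  have back : ¬ (j = some (D.bar e.1) ∧ τ = []) → D.Valid ((some e.1, []) :: (j, τ) :: r) ∧
      D.word ((some e.1, []) :: (j, τ) :: r) = y ++ [Sum.inr e] := by
    intro h
    exact ⟨.cons _ _ _ _ _ h1 h2 (hD.nil_mem _) h, by rw [hword, hw]⟩
  exact ⟨⟨key, fun h => ⟨_, back h⟩⟩, fun h => back (key h)⟩

theorem NF_prefixClosed : PrefixClosed D.NF := by
  have one : ∀ y b, y ++ [b] ∈ D.NF → y ∈ D.NF := by
    rintro y b ⟨z, hz, hw⟩
    obtain ⟨j, τ, r, hv, hw', h⟩ := hD.last_letter hz _ _ hw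
    rcases h with ⟨a, τ0, rfl, rfl, rfl⟩ | ⟨e, rfl, rfl, rfl⟩
    · rw [word_snoc] at hw'
      exact ⟨_, hv.replace (hD.NTr_closed _ _ hv.mem _ (List.prefix_append _ _)),
        (List.append_inj' hw' rfl).1⟩
    · obtain ⟨j2, τ2, r2, rfl, hv2, -⟩ := hv.tail
      refine ⟨_, hv2, ?_⟩
      change D.word ((j2, τ2) :: r2) ++ D.ltr (some e.1) ++ [] = _ at hw'
      rw [ltr_nT e.2, List.append_nil] at hw'
      exact (List.append_inj' hw' rfl).1
  rintro w hw p ⟨u, rfl⟩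
  induction u using List.reverseRecOn with
  | nil => simpa using hw
  | append_singleton u b ih =>
    rw [← List.append_assoc] at hw
    exact ih (one _ _ hw)

theorem nil_mem_NF : [] ∈ D.NF :=
  ⟨[(none, [])], .base _ (hD.nil_mem _), by simp [word, ltr]⟩

theorem s_ne {e : E} (he : e ∉ D.T) : D.s e ≠ 1 := by
  intro hs
  obtain ⟨h1, h2, h3⟩ := hD.nfx_spec (wordVal D.val []) (D.t (D.bar e))
  have hw := hD.word_nfx hD.nil_mem_NF (D.t (D.bar e))
  obtain ⟨j, τ, r, hx⟩ := h1.ne_nil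
  have hmem : ([] : List D.Letter) ++ [Sum.inr ⟨e, he⟩] ∈ D.NF := by
    rw [(hD.step_inr hD.nil_mem_NF ⟨e, he⟩ hx).1]
    rintro ⟨rfl, rfl⟩
    rw [hx] at hw
    change D.word r ++ D.ltr (some (D.bar e)) ++ [] = _ at hw
    rw [ltr_nT (D.bar_nT e he)] at hw
    simp at hw
  have := (hD.NF_unique 1).unique ⟨hD.nil_mem_NF, rfl⟩ ⟨hmem, by simp [wordVal, val, hs]⟩
  simp at this

theorem isInvGenSet : IsInvGenSet Γ D.val D.linv where
  ne_one := by
    rintro (a | e)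
    · exact hD.π_ne a
    · exact hD.s_ne e.2
  inv_invol := by
    rintro (a | e)
    · simp [linv, hD.inv_inv]
    · simp [linv, hD.bar_bar]
  val_inv := by
    rintro (a | e)
    · simp [linv, val, hD.π_inv]
    · simp [linv, val, hD.s_bar]
  gen := by
    rw [eq_top_iff, ← hD.gen, Subgroup.closure_le]
    rintro _ (⟨a, rfl⟩ | ⟨e, rfl⟩)
    · exact Subgroup.subset_closure ⟨Sum.inl a, rfl⟩
    · by_cases he : e ∈ D.T
      · rw [hD.s_T e he]; exact one_mem _
      · exact Subgroup.subset_closure ⟨Sum.inr ⟨e, he⟩, rfl⟩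

end Good
end GraphData

/-! ### The stacking function of the fundamental group -/

namespace GraphData

variable {Γ V E α : Type} [Group Γ]

/-- The edge of the top syllable. -/
def hd : List (Option E × List α) → Option E
  | [] => none
  | (j, _) :: _ => j

open Classical in
/-- A word spelling `g` in the letters attached to `j`, for `g` in the vertex group at the end
of `j`. -/
noncomputable def tr (D : GraphData Γ V E α) (j : Option E) (g : Γ) : List α :=
  if h : ∃ w : List α, (∀ b ∈ w, D.lab b = j) ∧ wordVal D.π w = g then h.choose else []

open Classical in
/-- The stacking map for a vertex letter `a`, read on the syllable sequence `x` ending at the vertex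
of `a`: a letter not attached to the top edge is rewritten into letters which are; a generator of
the edge group meeting an empty top syllable is conjugated across the edge; otherwise the stacking
map of the vertex group is used. -/
noncomputable def phiAt (D : GraphData Γ V E α) (a : α) :
    List (Option E × List α) → List D.Letter
  | [] => []
  | (j, τ) :: r =>
    if D.lab a ≠ j then (D.tr j (D.π a)).map Sum.inl
    else if τ = [] ∧ a ∈ D.B then
      D.ltr (j.map D.bar) ++ (D.tr (hd r) (D.sj j * D.π a * (D.sj j)⁻¹)).map Sum.inl ++ D.ltr j
    else (D.phi a τ).map Sum.inl

/-- The stacking function of `Γ`. -/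
noncomputable def Phi (D : GraphData Γ V E α) (y : List D.Letter) : D.Letter → List D.Letter
  | Sum.inl a => D.phiAt a (D.nfx (wordVal D.val y) (D.tt (D.lab a)))
  | Sum.inr e => [Sum.inr e]

/-- The condition under which the stacking function may be applied to `p`, together with the pairs
`q` it leads to. -/
def Red (D : GraphData Γ V E α) (q p : List D.Letter × D.Letter) : Prop :=
  p.1 ∈ D.NF ∧ p.1 ++ [p.2] ∉ D.NF ∧ (¬ ∃ y', p.1 = y' ++ [D.linv p.2]) ∧
    ∃ u u', D.Phi p.1 p.2 = u ++ q.2 :: u' ∧ q.1 ∈ D.NF ∧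
      wordVal D.val q.1 = wordVal D.val (p.1 ++ u)

/-- The part of a syllable sequence which governs the next step, where `c` is the state map of an
automaton reading syllables. -/
def summ {σ : Type} (c : List α → σ) : List (Option E × List α) → Option E × σ × Option E
  | [] => (none, c [], none)
  | (j, τ) :: r => (j, c τ, hd r)

theorem summ_append {σ : Type} (c : List α → σ) (l x x' : List (Option E × List α))
    (h : summ c x = summ c x') : summ c (l ++ x) = summ c (l ++ x') := by
  have hh : hd x = hd x' := by
    have := congrArg Prod.fst h
    cases x <;> cases x' <;> exact this
  match l with
  | [] => exact h
  | [_] => simp [summ, hh]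
  | _ :: _ :: _ => simp [summ, hd]

variable {D : GraphData Γ V E α}

namespace Good

variable (hD : D.Good)
include hD

theorem tr_spec {j g} (hg : g ∈ D.Gs (D.tt j)) :
    (∀ b ∈ D.tr j g, D.lab b = j) ∧ wordVal D.π (D.tr j g) = g := by
  have h := hD.words j g hg
  unfold tr
  rw [dif_pos h]
  exact h.choose_spec

theorem sj_conj {j a} (hj : D.lab a = j) (ha : a ∈ D.B) :
    ∃ e, j = some e ∧ D.s e * D.π a * (D.s e)⁻¹ ∈ D.H (some (D.bar e)) := by
  cases j with
  | none =>
    have := hD.B_H a ha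
    rw [hj, hD.H_none, Subgroup.mem_bot] at this
    exact absurd this (hD.π_ne a)
  | some e => exact ⟨e, rfl, hD.conj e _ (hj ▸ hD.B_H a ha)⟩

theorem phiAt_val {x} (hx : D.Valid x) (a : α) (he : D.endV x = D.tt (D.lab a)) :
    wordVal D.val (D.phiAt a x) = D.π a := by
  obtain ⟨j, τ, r, rfl⟩ := hx.ne_nil
  have he : D.tt j = D.tt (D.lab a) := he
  simp only [phiAt]
  split_ifs with h1 h2
  · rw [wordVal_inl]
    exact (hD.tr_spec (he ▸ hD.π_mem a)).2
  · push Not at h1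
    obtain ⟨e, rfl, hc⟩ := hD.sj_conj h1 h2.2
    obtain ⟨j', τ', r', rfl, hv, hj', -⟩ := hx.tail
    have hm : D.s e * D.π a * (D.s e)⁻¹ ∈ D.Gs (D.tt j') := by
      rw [hj']; exact hD.H_le _ hc
    have h3 := (hD.tr_spec hm).2
    rw [wordVal_append, wordVal_append, hD.val_ltr, hD.val_ltr, wordVal_inl]
    change D.s (D.bar e) * wordVal D.π (D.tr j' (D.s e * D.π a * (D.s e)⁻¹)) * D.s e = _
    rw [h3, hD.s_bar]
    group
  · push Not at h1
    subst h1
    rw [wordVal_inl, hD.phi_val a _ hx.mem]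

theorem exists_bound [Finite E] [Finite α] : ∃ K', ∀ y ∈ D.NF, ∀ b, (D.Phi y b).length ≤ K' := by
  have hb : ∃ K1, ∀ (j : Option E) (a : α), (D.tr j (D.π a)).length ≤ K1 := by
    have := (Set.finite_range (fun p : Option E × α => (D.tr p.1 (D.π p.2)).length)).bddAbove
    obtain ⟨K, hK⟩ := this
    exact ⟨K, fun j a => hK ⟨(j, a), rfl⟩⟩
  have hb' : ∃ K2, ∀ (j j' : Option E) (a : α),
      (D.tr j' (D.sj j * D.π a * (D.sj j)⁻¹)).length ≤ K2 := by
    have := (Set.finite_range (fun p : Option E × Option E × α =>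
      (D.tr p.2.1 (D.sj p.1 * D.π p.2.2 * (D.sj p.1)⁻¹)).length)).bddAbove
    obtain ⟨K, hK⟩ := this
    exact ⟨K, fun j j' a => hK ⟨(j, j', a), rfl⟩⟩
  have hl : ∀ j, (D.ltr j).length ≤ 1 := by
    rintro (_ | e)
    · simp [ltr]
    · by_cases h : e ∈ D.T
      · simp [ltr_T h]
      · simp [ltr_nT h]
  obtain ⟨K1, h1⟩ := hb
  obtain ⟨K2, h2⟩ := hb'
  refine ⟨K1 + K2 + D.K + 2, fun y hy b => ?_⟩
  rcases b with a | e
  · obtain ⟨hx, he, -⟩ := hD.nfx_spec (wordVal D.val y) (D.tt (D.lab a))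
    change (D.phiAt a (D.nfx (wordVal D.val y) (D.tt (D.lab a)))).length ≤ _
    generalize D.nfx (wordVal D.val y) (D.tt (D.lab a)) = x at hx he
    obtain ⟨j, τ, r, rfl⟩ := hx.ne_nil
    simp only [phiAt]
    split_ifs with h3 h4
    · have := h1 j a
      simp only [List.length_map]; omega
    · have := h2 j (hd r) a
      have := hl j
      have := hl (j.map D.bar)
      simp only [List.length_append, List.length_map]; omega
    · push Not at h3
      subst h3
      have := hD.phi_len a τ hx.mem
      simp only [List.length_map]; omega
  · simp [Phi]

/-- A normal form ending in a vertex letter `c` has `c` in its top syllable. -/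
theorem nfx_snoc {y} {c : α} (hy : y ++ [Sum.inl c] ∈ D.NF) :
    ∃ τ0 r, D.nfx (wordVal D.val (y ++ [Sum.inl c])) (D.tt (D.lab c)) =
      (D.lab c, τ0 ++ [c]) :: r := by
  obtain ⟨z, hz, hw⟩ := hy
  obtain ⟨j, τ, r, hv, hw', h⟩ := hD.last_letter hz _ _ hw
  rcases h with ⟨a, τ0, ha, rfl, rfl⟩ | ⟨e, he, -⟩
  · obtain rfl : c = a := by simpa using ha
    exact ⟨τ0, r, hD.nfx_eq hv rfl (by rw [← hD.val_word, hw'])⟩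
  · simp at he

theorem Phi_F2 {y} (hy : y ∈ D.NF) (b : D.Letter)
    (h : y ++ [b] ∈ D.NF ∨ ∃ y', y = y' ++ [D.linv b]) : D.Phi y b = [b] := by
  rcases b with a | e
  · have key : ∃ τ r, D.nfx (wordVal D.val y) (D.tt (D.lab a)) = (D.lab a, τ) :: r ∧
        (τ ++ [a] ∈ D.NTr (D.lab a) ∨ ∃ τ', τ = τ' ++ [D.inv a]) := by
      rcases h with h | ⟨y', rfl⟩
      · obtain ⟨hx, -, -⟩ := hD.nfx_spec (wordVal D.val y) (D.tt (D.lab a))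
        obtain ⟨j, τ, r, hxx⟩ := hx.ne_nil
        obtain ⟨rfl, h'⟩ := (hD.step_inl hy a hxx).1.1 h
        exact ⟨τ, r, hxx, Or.inl h'⟩
      · obtain ⟨τ0, r, h'⟩ := hD.nfx_snoc (c := D.inv a) hy
        rw [hD.lab_inv] at h'
        exact ⟨_, r, h', Or.inr ⟨τ0, rfl⟩⟩
    obtain ⟨τ, r, hx, h'⟩ := key
    have hv := (hD.nfx_spec (wordVal D.val y) (D.tt (D.lab a))).1
    rw [hx] at hv
    have hB : ¬ (τ = [] ∧ a ∈ D.B) := by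
      rintro ⟨rfl, haB⟩
      rcases h' with h' | ⟨τ', h'⟩
      · have := hD.nil_of_mem_H (τ := [a]) (by simpa using h')
          (by rw [wordVal_singleton]; exact hD.B_H a haB)
        simp at this
      · simp at h'
    change D.phiAt a _ = _
    rw [hx]
    simp only [phiAt, ne_eq, not_true_eq_false, if_false]
    rw [if_neg hB, hD.phi_F2 a τ hv.mem h']
    rfl
  · rfl

/-- Vertex groups act on reduced sequences, phrased with normal forms. -/
theorem nfx_act {j τ r} (hx : D.Valid ((j, τ) :: r)) {g} (hg : g ∈ D.Gs (D.tt j)) :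
    ∃ τ' r', D.nfx (D.sval ((j, τ) :: r) * g) (D.tt j) = (j, τ') :: r' ∧
      D.Valid ((j, τ') :: r') ∧ r'.length = r.length ∧
      wordVal D.π τ * g * (wordVal D.π τ')⁻¹ ∈ D.H j := by
  obtain ⟨τ', r', h1, h2, h3, h4⟩ := hD.exists_act hx j τ r rfl g hg
  refine ⟨τ', r', hD.nfx_eq h1 rfl h2, h1, ?_, h4⟩
  have := congrArg List.length h3
  simpa using this

theorem acc_inr (y) (e : {e : E // e ∉ D.T}) : Acc D.Red (y, Sum.inr e) := by
  refine ⟨_, ?_⟩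
  rintro q ⟨hy, hn, hne, -⟩
  exfalso
  dsimp only at hy hn hne
  obtain ⟨hv, -, -⟩ := hD.nfx_spec (wordVal D.val y) (D.t (D.bar e.1))
  obtain ⟨j, τ, r, hx⟩ := hv.ne_nil
  rw [(hD.step_inr hy e hx).1, not_not] at hn
  obtain ⟨rfl, rfl⟩ := hn
  have hw := hD.word_nfx hy (D.t (D.bar e.1))
  rw [hx] at hw
  change D.word r ++ D.ltr (some (D.bar e.1)) ++ [] = _ at hw
  rw [ltr_nT (D.bar_nT e.1 e.2), List.append_nil] at hw
  exact hne ⟨_, hw.symm⟩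

omit hD in
theorem split_map_inl {w : List α} {u u' : List D.Letter} {b : D.Letter}
    (h : w.map Sum.inl = u ++ b :: u') :
    ∃ w1 c w2, w = w1 ++ c :: w2 ∧ u = w1.map Sum.inl ∧ b = Sum.inl c := by
  obtain ⟨w1, w2, rfl, rfl, h2⟩ := List.map_eq_append_iff.1 h
  obtain ⟨c, w3, rfl, rfl, -⟩ := List.map_eq_cons_iff.1 h2
  exact ⟨w1, c, w3, rfl, rfl, rfl⟩

/-- Moving along the letters of a word attached to the top edge of `x`: if all pairs at sequences
of the same length with letters attached to the top edge are accessible, so are the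
pairs met along this word. -/
theorem acc_along {j τ r} (hx : D.Valid ((j, τ) :: r)) {w1 : List α} {c : α} {w2 : List α}
    (hl : ∀ b ∈ w1 ++ c :: w2, D.lab b = j)
    (ih : ∀ τ' r', r'.length = r.length → D.Valid ((j, τ') :: r') →
      wordVal D.π τ * wordVal D.π w1 * (wordVal D.π τ')⁻¹ ∈ D.H j →
      Acc D.Red (D.word ((j, τ') :: r'), Sum.inl c))
    {y} (hy : y ∈ D.NF)
    (hv : wordVal D.val y = D.sval ((j, τ) :: r) * wordVal D.π w1) :
    Acc D.Red (y, Sum.inl c) := by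
  have hg : wordVal D.π w1 ∈ D.Gs (D.tt j) :=
    hD.wordVal_mem_of_lab fun b hb => hl b (by simp [hb])
  obtain ⟨τ', r', h1, h2, h3, h4⟩ := hD.nfx_act hx hg
  have := ih τ' r' h3 h2 h4
  rwa [← h1, ← hv, hD.word_nfx hy] at this

/-- The stacking reduction terminates: an outer induction on the number of syllables and, for
letters attached to the top edge, an inner induction along the reduction of the
vertex group. -/
theorem acc_inl (n : ℕ) : ∀ j τ r a, r.length = n → D.Valid ((j, τ) :: r) →
    D.tt (D.lab a) = D.tt j → Acc D.Red (D.word ((j, τ) :: r), Sum.inl a) := by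
  induction n using Nat.strong_induction_on with
  | _ n ihn =>
  have inner : ∀ p : Γ × α, Acc D.Step p → ∀ τ r, r.length = n → D.Valid ((D.lab p.2, τ) :: r) →
      wordVal D.π τ * p.1⁻¹ ∈ D.H (D.lab p.2) →
      Acc D.Red (D.word ((D.lab p.2, τ) :: r), Sum.inl p.2) := by
    intro p hp
    induction hp with
    | intro p hp ihp =>
    rintro τ r rfl hx hH
    obtain ⟨g, a⟩ := p
    dsimp only at hx hH ihp hp ⊢
    have hnf : D.nfx (wordVal D.val (D.word ((D.lab a, τ) :: r))) (D.tt (D.lab a)) =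
      (D.lab a, τ) :: r := hD.nfx_eq hx rfl (hD.val_word _).symm
    refine ⟨_, ?_⟩
    rintro ⟨y, b⟩ ⟨hy0, hn, hne, u, u', hphi, hy, hval⟩
    dsimp only at hy0 hn hne hphi hy hval
    change D.phiAt a _ = _ at hphi
    rw [hnf] at hphi
    rw [wordVal_append, hD.val_word] at hval
    simp only [phiAt, ne_eq, not_true_eq_false, if_false] at hphi
    split_ifs at hphi with hB
    · obtain ⟨e, hje, hc⟩ := hD.sj_conj rfl hB.2
      obtain ⟨rfl, haB⟩ := hB
      rcases b with c | f
      swap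
      · exact hD.acc_inr _ _
      rw [hje] at hphi hx hval
      obtain ⟨j', τ', r', rfl, hv', hj', -⟩ := hx.tail
      have hm : D.s e * D.π a * (D.s e)⁻¹ ∈ D.Gs (D.tt j') := by
        rw [hj']; exact hD.H_le _ hc
      have htr := hD.tr_spec hm
      -- the letter `c` lies in the middle part of the word
      have hmid : ∃ w1 w2, D.tr j' (D.s e * D.π a * (D.s e)⁻¹) = w1 ++ c :: w2 ∧
          u = D.ltr (some (D.bar e)) ++ w1.map Sum.inl := by
        change D.ltr (some (D.bar e)) ++ (D.tr j' (D.s e * D.π a * (D.s e)⁻¹)).map Sum.inl ++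
          D.ltr (some e) = _ at hphi
        generalize D.tr j' (D.s e * D.π a * (D.s e)⁻¹) = w at hphi
        by_cases heT : e ∈ D.T
        · rw [ltr_T heT, ltr_T (hD.bar_T e heT), List.append_nil, List.nil_append] at hphi
          obtain ⟨w1, c', w2, rfl, rfl, hcc⟩ := split_map_inl hphi
          obtain rfl : c = c' := by simpa using hcc
          exact ⟨w1, w2, rfl, by rw [ltr_T (hD.bar_T e heT)]; rfl⟩
        · rw [ltr_nT heT, ltr_nT (D.bar_nT e heT)] at hphi
          rw [ltr_nT (D.bar_nT e heT)]
          rcases u with _ | ⟨u0, u⟩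
          · simp at hphi
          · simp only [List.cons_append, List.nil_append, List.cons.injEq] at hphi
            obtain ⟨rfl, hphi⟩ := hphi
            rcases List.eq_nil_or_concat' u' with rfl | ⟨u'', l, rfl⟩
            · have := (List.append_inj' hphi rfl).2
              simp at this
            · rw [← List.cons_append, ← List.append_assoc] at hphi
              have := (List.append_inj' hphi rfl).1
              obtain ⟨w1, c', w2, rfl, rfl, hcc⟩ := split_map_inl this
              obtain rfl : c = c' := by simpa using hcc
              exact ⟨w1, w2, rfl, rfl⟩
      obtain ⟨w1, w2, hw, rfl⟩ := hmid
      rw [hw] at htr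
      refine hD.acc_along hv' htr.1 ?_ hy ?_
      · intro τ2 r2 hr2 hv2 _
        exact ihn _ (by simp) _ _ _ _ hr2 hv2 (by rw [htr.1 c (by simp)])
      · rw [hval, wordVal_append, hD.val_ltr, wordVal_inl]
        change D.sval ((j', τ') :: r') * D.s e * 1 * (D.s (D.bar e) * _) = _
        rw [hD.s_bar]; group
    · obtain ⟨w1, c, w2, hw, rfl, rfl⟩ := split_map_inl hphi
      have hlab := hD.phi_lab a τ hx.mem
      rw [hw] at hlab
      have hlc : D.lab c = D.lab a := hlab c (by simp)
      rw [wordVal_inl] at hval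
      refine hD.acc_along hx hlab ?_ hy hval
      intro τ2 r2 hr2 hv2 hH2
      have hstep : D.Step (g * wordVal D.π w1, c) (g, a) := by
        refine ⟨τ, hx.mem, hH, hB, ?_, ?_, w1, w2, hw, rfl⟩
        · intro h
          exact hn ((hD.step_inl hy0 a hnf).1.2 ⟨rfl, h⟩)
        · rintro ⟨τ', rfl⟩
          refine hne ⟨D.word ((D.lab a, τ') :: r), ?_⟩
          rw [word_snoc]; rfl
      have := ihp _ hstep τ2 r2 hr2 (hlc ▸ hv2) (by
        dsimp only
        rw [hlc]
        have := mul_mem (inv_mem hH2) hH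
        simpa [mul_assoc] using this)
      dsimp only at this
      rwa [hlc] at this
  rintro j τ r a rfl hx hta
  have same : ∀ j τ r' a, r'.length = r.length → D.Valid ((j, τ) :: r') → D.lab a = j →
      Acc D.Red (D.word ((j, τ) :: r'), Sum.inl a) := by
    rintro j τ r' a hr hx rfl
    have hg := hD.NTr_val_mem hx.mem
    exact inner (wordVal D.π τ, a) (hD.acc a _ hg) τ r' hr hx
      (by rw [mul_inv_cancel]; exact one_mem _)
  by_cases hj : D.lab a = j
  · exact same j τ r a rfl hx hj
  have hnf : D.nfx (wordVal D.val (D.word ((j, τ) :: r))) (D.tt (D.lab a)) =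
    (j, τ) :: r := hD.nfx_eq hx hta.symm (hD.val_word _).symm
  refine ⟨_, ?_⟩
  rintro ⟨y, b⟩ ⟨hy0, hn, hne, u, u', hphi, hy, hval⟩
  dsimp only at hphi hy hval
  change D.phiAt a _ = _ at hphi
  rw [hnf] at hphi
  rw [wordVal_append, hD.val_word] at hval
  simp only [phiAt, ne_eq, hj, not_false_eq_true, if_true] at hphi
  have htr := hD.tr_spec (j := j) (g := D.π a) (hta ▸ hD.π_mem a)
  obtain ⟨w1, c, w2, hw, rfl, rfl⟩ := split_map_inl hphi
  rw [hw] at htr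
  rw [wordVal_inl] at hval
  refine hD.acc_along hx htr.1 ?_ hy hval
  intro τ2 r2 hr2 hv2 _
  exact same _ _ _ _ hr2 hv2 (htr.1 c (by simp))

theorem acc_red {y} (hy : y ∈ D.NF) (b : D.Letter) : Acc D.Red (y, b) := by
  rcases b with a | e
  · obtain ⟨hv, he, -⟩ := hD.nfx_spec (wordVal D.val y) (D.tt (D.lab a))
    have hw := hD.word_nfx hy (D.tt (D.lab a))
    obtain ⟨j, τ, r, hx⟩ := hv.ne_nil
    rw [hx] at hv he hw
    rw [← hw]
    exact hD.acc_inl _ j τ r a rfl hv he.symm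
  · exact hD.acc_inr y e

/-! ### Regularity of the stacking function -/

/-- Transport of a sequence along a reduced tree path which does not cancel its top edge. -/
theorem valid_path (p : List E) : ∀ u v j τ r, IsEdgePath (fun e => D.t (D.bar e)) D.t u p v →
    (∀ e ∈ p, e ∈ D.T) → List.IsChain (fun e f => f ≠ D.bar e) p →
    D.Valid ((j, τ) :: r) → D.tt j = u →
    (∀ f ∈ p.head?, ¬ (j = some (D.bar f) ∧ τ = [])) →
    let x := (p.reverse.map fun e => (some e, [])) ++ (j, τ) :: r
    D.Valid x ∧ D.endV x = v ∧ D.sval x = D.sval ((j, τ) :: r) := by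
  induction p with
  | nil =>
    rintro u v j τ r rfl - - hx rfl -
    exact ⟨hx, rfl, rfl⟩
  | cons e p ih =>
    rintro u v j τ r ⟨hu, hp⟩ hT hc hx rfl hh
    have hx' : D.Valid ((some e, []) :: (j, τ) :: r) :=
      .cons e [] j τ r hx hu.symm (hD.nil_mem _) (hh e (by simp))
    have := ih (D.t e) v (some e) [] ((j, τ) :: r) hp (fun f hf => hT f (List.mem_cons_of_mem _ hf))
      hc.tail hx' rfl (by
        rintro f hf ⟨hef, -⟩
        cases p with
        | nil => simp at hf
        | cons f' p =>
          obtain rfl : f' = f := by simpa using hf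
          rw [List.isChain_cons_cons] at hc
          apply hc.1
          have : e = D.bar f' := by simpa using hef
          rw [this, hD.bar_bar])
    dsimp only at this ⊢
    rw [List.reverse_cons, List.map_append, List.append_assoc]
    refine ⟨this.1, this.2.1, this.2.2.trans ?_⟩
    change D.sval ((j, τ) :: r) * D.s e * 1 = _
    rw [hD.s_T e (hT e (by simp)), mul_one, mul_one]

/-- Two sequences with the same top part, whose top edge is not cancelled by tree edges, have
the same top part after transport to any vertex. -/
theorem summ_transport {σ : Type} {c : List α → σ} {j τ r τ' r'} (hx : D.Valid ((j, τ) :: r))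
    (hx' : D.Valid ((j, τ') :: r')) (hne : ∀ e ∈ D.T, ¬ (j = some e ∧ τ = []))
    (hne' : ∀ e ∈ D.T, ¬ (j = some e ∧ τ' = []))
    (h : summ c ((j, τ) :: r) = summ c ((j, τ') :: r')) (v : V) :
    summ c (D.nfx (D.sval ((j, τ) :: r)) v) = summ c (D.nfx (D.sval ((j, τ') :: r')) v) := by
  obtain ⟨p, hT, hp, hc⟩ := hD.tree (D.tt j) v
  have h1 := hD.valid_path p _ _ _ _ _ hp hT hc hx rfl (fun f hf =>
    hne _ (hD.bar_T _ (hT f (List.mem_of_mem_head? hf))))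
  have h2 := hD.valid_path p _ _ _ _ _ hp hT hc hx' rfl (fun f hf =>
    hne' _ (hD.bar_T _ (hT f (List.mem_of_mem_head? hf))))
  rw [hD.nfx_eq h1.1 h1.2.1 h1.2.2, hD.nfx_eq h2.1 h2.2.1 h2.2.2]
  exact summ_append c _ _ _ h

open Classical in
/-- The normal forms and the stacking function are recognised by a finite automaton, whose state
is the top part of the syllable sequence at every vertex. -/
theorem finObs_main [Finite V] [Finite E] [Finite α] :
    FinObs (fun w => (w ∈ D.NF, fun b => {z | w ∈ D.NF ∧ z = D.Phi w b})) := by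
  have hnil : FinObs (fun w : List α => w = []) :=
    (finObs_head? (α := α)).of_imp (fun w w' h => by cases w <;> cases w' <;> simp_all)
  obtain ⟨σ, hσ, c, hc, hcf⟩ := hD.reg.prod hnil
  have c1 : ∀ {τ τ'}, c τ = c τ' → ∀ j, (τ ∈ D.NTr j ↔ τ' ∈ D.NTr j) := by
    intro τ τ' h j
    exact iff_of_eq (congrFun (congrArg Prod.fst (congrArg Prod.fst (hcf _ _ h))) j)
  have c2 : ∀ {τ τ'}, c τ = c τ' → ∀ a, τ ∈ D.NTr (D.lab a) → D.phi a τ = D.phi a τ' := by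
    intro τ τ' h a hτ
    have := congrFun (congrArg Prod.snd (congrArg Prod.fst (hcf _ _ h))) a
    have h1 : D.phi a τ ∈ {z | τ ∈ D.NTr (D.lab a) ∧ z = D.phi a τ} := ⟨hτ, rfl⟩
    have h2 : {z | τ ∈ D.NTr (D.lab a) ∧ z = D.phi a τ} =
      {z | τ' ∈ D.NTr (D.lab a) ∧ z = D.phi a τ'} := this
    rw [h2] at h1
    exact h1.2
  have c3 : ∀ {τ τ'}, c τ = c τ' → (τ = [] ↔ τ' = []) := by
    intro τ τ' h
    exact iff_of_eq (congrArg Prod.snd (hcf _ _ h))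
  let q : List D.Letter → Option (V → Option E × σ × Option E) := fun y =>
    if y ∈ D.NF then some (fun v => summ c (D.nfx (wordVal D.val y) v)) else none
  have hq0 : ∀ {y}, y ∉ D.NF → q y = none := fun h => if_neg h
  have hq1 : ∀ {y}, y ∈ D.NF → q y = some (fun v => summ c (D.nfx (wordVal D.val y) v)) :=
    fun h => if_pos h
  have hqm : ∀ {y y'}, q y = q y' → (y ∈ D.NF ↔ y' ∈ D.NF) := by
    intro y y' h
    by_cases h1 : y ∈ D.NF <;> by_cases h2 : y' ∈ D.NF <;> simp_all
  have hqs : ∀ {y y'}, q y = q y' → y ∈ D.NF → y' ∈ D.NF → ∀ v,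
      ∃ j τ r τ' r', D.nfx (wordVal D.val y) v = (j, τ) :: r ∧
        D.nfx (wordVal D.val y') v = (j, τ') :: r' ∧ c τ = c τ' ∧ hd r = hd r' := by
    intro y y' h h1 h2 v
    rw [hq1 h1, hq1 h2, Option.some_inj] at h
    have h := congrFun h v
    obtain ⟨j, τ, r, hx⟩ := (hD.nfx_spec (wordVal D.val y) v).1.ne_nil
    obtain ⟨j', τ', r', hx'⟩ := (hD.nfx_spec (wordVal D.val y') v).1.ne_nil
    rw [hx, hx'] at h
    simp only [summ, Prod.mk.injEq] at h
    obtain ⟨rfl, h3, h4⟩ := h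
    exact ⟨j, τ, r, τ', r', hx, hx', h3, h4⟩
  have hrc : RightCong q := by
    intro y y' b h
    have hpc := hD.NF_prefixClosed
    by_cases h1 : y ∈ D.NF
    swap
    · have h2 : y' ∉ D.NF := fun h' => h1 ((hqm h).2 h')
      rw [hq0 (fun h' => h1 (hpc _ h' _ (List.prefix_append _ _))),
        hq0 (fun h' => h2 (hpc _ h' _ (List.prefix_append _ _)))]
    have h2 : y' ∈ D.NF := (hqm h).1 h1
    have fin : (y ++ [b] ∈ D.NF ↔ y' ++ [b] ∈ D.NF) →
        (y ++ [b] ∈ D.NF → y' ++ [b] ∈ D.NF → ∃ j τ r τ' r', D.Valid ((j, τ) :: r) ∧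
          D.word ((j, τ) :: r) = y ++ [b] ∧ D.Valid ((j, τ') :: r') ∧
          D.word ((j, τ') :: r') = y' ++ [b] ∧ (∀ e ∈ D.T, ¬ (j = some e ∧ τ = [])) ∧
          (∀ e ∈ D.T, ¬ (j = some e ∧ τ' = [])) ∧ c τ = c τ' ∧ hd r = hd r') →
        q (y ++ [b]) = q (y' ++ [b]) := by
      intro hm hs
      by_cases h3 : y ++ [b] ∈ D.NF
      · obtain ⟨j, τ, r, τ', r', a1, a2, a3, a4, a5, a6, a7, a8⟩ := hs h3 (hm.1 h3)
        rw [hq1 h3, hq1 (hm.1 h3), Option.some_inj]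
        funext v
        have := hD.summ_transport (c := c) a1 a3 a5 a6 (by simp [summ, a7, a8]) v
        rwa [← hD.val_word, ← hD.val_word, a2, a4] at this
      · rw [hq0 h3, hq0 (fun h' => h3 (hm.2 h'))]
    rcases b with a | e
    · obtain ⟨j, τ, r, τ', r', hx, hx', e1, e2⟩ := hqs h h1 h2 (D.tt (D.lab a))
      obtain ⟨s1, s2⟩ := hD.step_inl h1 a hx
      obtain ⟨s1', s2'⟩ := hD.step_inl h2 a hx'
      have e1' := hc _ _ a e1
      refine fin ?_ ?_
      · rw [s1, s1', c1 e1']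
      · intro h3 h4
        exact ⟨_, _, _, _, _, (s2 h3).1, (s2 h3).2, (s2' h4).1, (s2' h4).2, by simp, by simp,
          e1', e2⟩
    · obtain ⟨j, τ, r, τ', r', hx, hx', e1, e2⟩ := hqs h h1 h2 (D.t (D.bar e.1))
      obtain ⟨s1, s2⟩ := hD.step_inr h1 e hx
      obtain ⟨s1', s2'⟩ := hD.step_inr h2 e hx'
      have hnT : ∀ f ∈ D.T, ¬ (some e.1 = some f ∧ ([] : List α) = []) := by
        rintro f hf ⟨hef, -⟩
        have : e.1 = f := by simpa using hef
        exact e.2 (this ▸ hf)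
      refine fin ?_ ?_
      · rw [s1, s1', c3 e1]
      · intro h3 h4
        exact ⟨_, _, _, _, _, (s2 h3).1, (s2 h3).2, (s2' h4).1, (s2' h4).2, hnT, hnT, rfl, rfl⟩
  refine hrc.finObs.of_imp ?_
  intro y y' h
  by_cases h1 : y ∈ D.NF
  swap
  · have h2 : y' ∉ D.NF := fun h' => h1 ((hqm h).2 h')
    simp [h1, h2]
  have h2 : y' ∈ D.NF := (hqm h).1 h1
  have : ∀ b, D.Phi y b = D.Phi y' b := by
    rintro (a | e)
    · obtain ⟨j, τ, r, τ', r', hx, hx', e1, e2⟩ := hqs h h1 h2 (D.tt (D.lab a))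
      have hv := (hD.nfx_spec (wordVal D.val y) (D.tt (D.lab a))).1
      change D.phiAt a _ = D.phiAt a _
      rw [hx] at hv
      rw [hx, hx']
      simp only [phiAt]
      simp only [c3 e1, e2]
      by_cases hj : D.lab a = j
      · subst hj
        rw [c2 e1 a hv.mem]
      · simp [hj]
    · rfl
  simp [h1, h2, this]

/-- The fundamental group carries an autostackable structure. -/
theorem autostackable [Finite V] [Finite E] [Finite α] : Autostackable Γ := by
  classical
  obtain ⟨K', hK'⟩ := hD.exists_bound
  refine ⟨D.Letter, Fintype.ofFinite _, D.val, D.linv, ⟨D.NF, K', D.Phi⟩, ?_, ?_, ?_⟩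
  · refine ⟨hD.isInvGenSet, hD.NF_unique, hD.NF_prefixClosed, ?_, fun y hy b => hD.Phi_F2 hy b, ?_⟩
    · intro y hy b
      refine ⟨?_, hK' y hy b⟩
      rcases b with a | e
      · obtain ⟨h1, h2, -⟩ := hD.nfx_spec (wordVal D.val y) (D.tt (D.lab a))
        exact hD.phiAt_val h1 a h2
      · exact wordVal_singleton _ _
    · rintro ⟨seq, h⟩
      have : IsEmpty {f : ℕ → _ // f 0 = seq 0 ∧ ∀ n, D.Red (f (n + 1)) (f n)} :=
        acc_iff_isEmpty_descending_chain.1 (hD.acc_red (h 0).1 (seq 0).2)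
      refine this.false ⟨seq, rfl, fun i => ?_⟩
      obtain ⟨h1, h2, h3, u, u', h4, h5, h6⟩ := h i
      exact ⟨h1, h2, h3, u, u', h4, h5, h6⟩
  · exact (hD.finObs_main.of_imp (fun _ _ h => congrArg Prod.fst h)).isRegularLang
  · exact syncRegular3_of_finObs hK' (hD.finObs_main.of_imp (fun _ _ h => congrArg Prod.snd h))

end Good
end GraphData

/-! ### The action of the vertex groups and the edges on reduced syllable sequences -/

/-- The vertex groups of a graph of groups, realised as subgroups `G v` of some group `M` in which
they do not interact; `A j` are the edge groups, `θ e` is the identification of the edge group of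
`e` with the one of the reversed edge, and the words in `NTr j` are transversals for `A j`. -/
structure GraphData.Lift {Γ V E α : Type} [Group Γ] (D : GraphData Γ V E α)
    (M : Type) [Group M] where
  π0 : α → M
  G : V → Subgroup M
  A : Option E → Subgroup M
  θ : E → M → M
  bar_bar : ∀ e, D.bar (D.bar e) = e
  A_none : A none = ⊥
  A_le : ∀ j, A j ≤ G (D.tt j)
  θ_mem : ∀ e, ∀ a ∈ A (some e), θ e a ∈ A (some (D.bar e))
  θ_mul : ∀ e, ∀ a ∈ A (some e), ∀ b ∈ A (some e), θ e (a * b) = θ e a * θ e b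
  θ_θ : ∀ e, ∀ a ∈ A (some e), θ (D.bar e) (θ e a) = a
  NTr_mem : ∀ j, ∀ w ∈ D.NTr j, wordVal π0 w ∈ G (D.tt j)
  NTr_nil : ∀ j, [] ∈ D.NTr j
  NTr_rep : ∀ j, ∀ g ∈ G (D.tt j), ∃ w ∈ D.NTr j, wordVal π0 w * g⁻¹ ∈ A j
  NTr_uniq : ∀ j, ∀ w ∈ D.NTr j, ∀ w' ∈ D.NTr j,
    wordVal π0 w * (wordVal π0 w')⁻¹ ∈ A j → w = w'

namespace GraphData.Lift

variable {Γ V E α M : Type} [Group Γ] {D : GraphData Γ V E α} [Group M] (L : D.Lift M)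

open Classical in
/-- The transversal word for the coset of `m`. -/
noncomputable def rep (j : Option E) (m : M) : List α :=
  if h : ∃ w, w ∈ D.NTr j ∧ wordVal L.π0 w * m⁻¹ ∈ L.A j then h.choose else []

/-- The edge group part of `m`. -/
noncomputable def cf (j : Option E) (m : M) : M := m * (wordVal L.π0 (L.rep j m))⁻¹

/-- Right multiplication of a syllable sequence by an element of the vertex group at its end:
the edge group part is pushed across the edges towards the bottom. -/
noncomputable def act : M → List (Option E × List α) → List (Option E × List α)
  | _, [] => []
  | g, (none, τ) :: r => (none, L.rep none (wordVal L.π0 τ * g)) :: r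
  | g, (some e, τ) :: r => (some e, L.rep (some e) (wordVal L.π0 τ * g)) ::
      act (L.θ e (L.cf (some e) (wordVal L.π0 τ * g))) r

open Classical in
/-- Right multiplication of a syllable sequence by an edge: the edge is added on top, or
cancelled. -/
noncomputable def edge (_L : D.Lift M) (e : E) :
    List (Option E × List α) → List (Option E × List α)
  | [] => []
  | (j, τ) :: r => if j = some (D.bar e) ∧ τ = [] then r else (some e, []) :: (j, τ) :: r

theorem rep_spec {j m} (hm : m ∈ L.G (D.tt j)) :
    L.rep j m ∈ D.NTr j ∧ wordVal L.π0 (L.rep j m) * m⁻¹ ∈ L.A j := by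
  have h := L.NTr_rep j m hm
  unfold rep
  rw [dif_pos h]
  exact h.choose_spec

theorem cf_mem {j m} (hm : m ∈ L.G (D.tt j)) : L.cf j m ∈ L.A j := by
  have := inv_mem (L.rep_spec hm).2
  simpa [cf] using this

theorem cf_mul_rep (j m) : L.cf j m * wordVal L.π0 (L.rep j m) = m := by
  simp [cf]

theorem rep_eq {j m w} (hm : m ∈ L.G (D.tt j)) (hw : w ∈ D.NTr j)
    (h : m * (wordVal L.π0 w)⁻¹ ∈ L.A j) : L.rep j m = w := by
  obtain ⟨h1, h2⟩ := L.rep_spec hm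
  refine L.NTr_uniq j _ h1 _ hw ?_
  have := mul_mem h2 h
  simpa [mul_assoc] using this

theorem rep_mul {j a m} (hm : m ∈ L.G (D.tt j)) (ha : a ∈ L.A j) :
    L.rep j (a * m) = L.rep j m := by
  refine L.rep_eq (mul_mem (L.A_le j ha) hm) (L.rep_spec hm).1 ?_
  rw [mul_assoc]
  exact mul_mem ha (L.cf_mem hm)

theorem cf_mul {j a m} (hm : m ∈ L.G (D.tt j)) (ha : a ∈ L.A j) :
    L.cf j (a * m) = a * L.cf j m := by
  rw [cf, L.rep_mul hm ha, cf, mul_assoc]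

theorem rep_word {j w} (hw : w ∈ D.NTr j) : L.rep j (wordVal L.π0 w) = w :=
  L.rep_eq (L.NTr_mem j w hw) hw (by rw [mul_inv_cancel]; exact one_mem _)

theorem cf_word {j w} (hw : w ∈ D.NTr j) : L.cf j (wordVal L.π0 w) = 1 := by
  rw [cf, L.rep_word hw, mul_inv_cancel]

theorem rep_A {j a} (ha : a ∈ L.A j) : L.rep j a = [] :=
  L.rep_eq (L.A_le j ha) (L.NTr_nil j) (by simpa [wordVal_nil] using ha)

theorem cf_A {j a} (ha : a ∈ L.A j) : L.cf j a = a := by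
  rw [cf, L.rep_A ha, wordVal_nil, inv_one, mul_one]

theorem θ_one (e) : L.θ e 1 = 1 := by
  have := L.θ_mul e 1 (one_mem _) 1 (one_mem _)
  simpa using this

theorem θ_inv (e) {a} (ha : a ∈ L.A (some e)) : L.θ e a⁻¹ = (L.θ e a)⁻¹ := by
  have := L.θ_mul e a ha _ (inv_mem ha)
  rw [mul_inv_cancel, L.θ_one] at this
  exact (inv_eq_of_mul_eq_one_right this.symm).symm

/-- An element of the edge group of the top edge does not change whether the top syllable is
trivial. -/
theorem rep_nil_iff {j τ a} (hτ : τ ∈ D.NTr j) (ha : a ∈ L.A j) :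
    L.rep j (wordVal L.π0 τ * a) = [] ↔ τ = [] := by
  constructor
  · intro h
    have hm := mul_mem (L.NTr_mem j τ hτ) (L.A_le j ha)
    have h2 := L.cf_mem hm
    rw [cf, h, wordVal_nil, inv_one, mul_one] at h2
    have h3 := mul_mem h2 (inv_mem ha)
    rw [mul_inv_cancel_right] at h3
    exact L.NTr_uniq j τ hτ [] (L.NTr_nil j) (by simpa [wordVal_nil] using h3)
  · rintro rfl
    rw [wordVal_nil, one_mul, L.rep_A ha]

theorem act_head (g j τ r) : ∃ r', L.act g ((j, τ) :: r) =
    (j, L.rep j (wordVal L.π0 τ * g)) :: r' := by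
  cases j <;> exact ⟨_, rfl⟩

theorem endV_act (g x) : D.endV (L.act g x) = D.endV x := by
  rcases x with _ | ⟨⟨_ | e, τ⟩, r⟩ <;> rfl

theorem valid_act {x} (hx : D.Valid x) : ∀ g ∈ L.G (D.endV x), D.Valid (L.act g x) := by
  induction hx with
  | base τ hτ =>
    intro g hg
    exact .base _ (L.rep_spec (j := none) (mul_mem (L.NTr_mem _ _ hτ) hg)).1
  | cons e τ j τ' r hr hj hτ hred ih =>
    intro g hg
    have hm := mul_mem (L.NTr_mem (some e) _ hτ) hg
    have hc := L.θ_mem _ _ (L.cf_mem hm)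
    have hc' : L.θ e (L.cf (some e) (wordVal L.π0 τ * g)) ∈ L.G (D.tt j) := by
      rw [hj]; exact L.A_le _ hc
    have hv := ih _ hc'
    obtain ⟨r', hr'⟩ := L.act_head (L.θ e (L.cf (some e) (wordVal L.π0 τ * g))) j τ' r
    rw [act]
    rw [hr'] at hv ⊢
    refine .cons _ _ _ _ _ hv hj (L.rep_spec hm).1 ?_
    rintro ⟨rfl, h⟩
    exact hred ⟨rfl, (L.rep_nil_iff hr.mem hc).1 h⟩

theorem act_one {x} (hx : D.Valid x) : L.act 1 x = x := by
  induction hx with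
  | base τ hτ => rw [act, mul_one, L.rep_word hτ]
  | cons e τ j τ' r hr hj hτ hred ih =>
    rw [act, mul_one, L.rep_word hτ, L.cf_word hτ, L.θ_one, ih]

theorem act_mul {x} (hx : D.Valid x) : ∀ g ∈ L.G (D.endV x), ∀ h ∈ L.G (D.endV x),
    L.act (g * h) x = L.act h (L.act g x) := by
  induction hx with
  | base τ hτ =>
    intro g hg h hh
    have hm := mul_mem (L.NTr_mem none _ hτ) hg
    have hr := (L.rep_spec (j := none) hm).1
    have hm' := mul_mem (L.NTr_mem none _ hr) hh
    rw [act, act, act, ← mul_assoc, ← L.cf_mul_rep none (wordVal L.π0 τ * g), mul_assoc,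
      L.rep_mul hm' (L.cf_mem hm), L.cf_mul_rep]
  | cons e τ j τ' r hr hj hτ hred ih =>
    intro g hg h hh
    have hm := mul_mem (L.NTr_mem (some e) _ hτ) hg
    have hrp := (L.rep_spec (j := some e) hm).1
    have hm' := mul_mem (L.NTr_mem (some e) _ hrp) hh
    have h1 := L.cf_mem (j := some e) hm
    have h2 := L.cf_mem (j := some e) hm'
    have h1' := L.A_le _ (L.θ_mem _ _ h1)
    have h2' := L.A_le _ (L.θ_mem _ _ h2)
    rw [act, act, act]
    conv_lhs => rw [← mul_assoc, ← L.cf_mul_rep (some e) (wordVal L.π0 τ * g), mul_assoc]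
    rw [L.rep_mul hm' h1, L.cf_mul hm' h1, L.θ_mul _ _ h1 _ h2]
    rw [ih _ (by rw [endV, hj]; exact h1') _ (by rw [endV, hj]; exact h2')]

theorem valid_edge {x} (hx : D.Valid x) (e : E) (he : D.endV x = D.t (D.bar e)) :
    D.Valid (L.edge e x) ∧ D.endV (L.edge e x) = D.t e := by
  obtain ⟨j, τ, r, rfl⟩ := hx.ne_nil
  unfold edge
  dsimp only
  split_ifs with h
  · obtain ⟨rfl, rfl⟩ := h
    obtain ⟨j', τ', r', rfl, hv, hj', -⟩ := hx.tail
    rw [L.bar_bar] at hj'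
    exact ⟨hv, hj'⟩
  · exact ⟨.cons e [] j τ r hx he (L.NTr_nil _) h, rfl⟩

theorem edge_edge {x} (hx : D.Valid x) (e : E) : L.edge (D.bar e) (L.edge e x) = x := by
  obtain ⟨j, τ, r, rfl⟩ := hx.ne_nil
  by_cases h : j = some (D.bar e) ∧ τ = []
  · obtain ⟨rfl, rfl⟩ := h
    obtain ⟨j', τ', r', rfl, hv, hj', hred⟩ := hx.tail
    simp [edge, hred]
  · simp [edge, h, L.bar_bar]

/-- The edge moves are equivariant for the edge groups. -/
theorem edge_act {x} (hx : D.Valid x) (e : E) {a}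
    (ha : a ∈ L.A (some e)) : L.edge e (L.act (L.θ e a) x) = L.act a (L.edge e x) := by
  obtain ⟨j, τ, r, rfl⟩ := hx.ne_nil
  have hθ := L.θ_mem e a ha
  by_cases h : j = some (D.bar e) ∧ τ = []
  · obtain ⟨rfl, rfl⟩ := h
    rw [act, wordVal_nil, one_mul, L.rep_A hθ, L.cf_A hθ, L.θ_θ e a ha]
    simp [edge]
  · obtain ⟨r', hr'⟩ := L.act_head (L.θ e a) j τ r
    have h' : ¬ (j = some (D.bar e) ∧ L.rep j (wordVal L.π0 τ * L.θ e a) = []) := by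
      rintro ⟨rfl, h'⟩
      exact h ⟨rfl, (L.rep_nil_iff hx.mem hθ).1 h'⟩
    have e1 : L.edge e ((j, τ) :: r) = (some e, []) :: (j, τ) :: r := by
      simp [edge, h]
    rw [e1, act, wordVal_nil, one_mul, L.rep_A ha, L.cf_A ha, hr']
    simp [edge, h']

/-! ### Transport along the spanning tree -/

/-- The reduced sequences ending at `v`. -/
def At (D : GraphData Γ V E α) (v : V) : Set (List (Option E × List α)) :=
  {x | D.Valid x ∧ D.endV x = v}

theorem edge_at {x e} (hx : x ∈ At D (D.t (D.bar e))) : L.edge e x ∈ At D (D.t e) :=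
  L.valid_edge hx.1 e hx.2

theorem edge_at' {x e} (hx : x ∈ At D (D.t e)) : L.edge (D.bar e) x ∈ At D (D.t (D.bar e)) :=
  L.edge_at (by rwa [L.bar_bar])

theorem edge_edge' {x e} (hx : x ∈ At D (D.t e)) : L.edge e (L.edge (D.bar e) x) = x := by
  have := L.edge_edge hx.1 (D.bar e)
  rwa [L.bar_bar] at this

theorem act_at {x v g} (hx : x ∈ At D v) (hg : g ∈ L.G v) : L.act g x ∈ At D v :=
  ⟨L.valid_act hx.1 g (by rwa [hx.2]), by rw [L.endV_act, hx.2]⟩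

theorem act_mul' {x v g h} (hx : x ∈ At D v) (hg : g ∈ L.G v) (hh : h ∈ L.G v) :
    L.act (g * h) x = L.act h (L.act g x) :=
  L.act_mul hx.1 g (by rwa [hx.2]) h (by rwa [hx.2])

/-- Transport along an edge path. -/
noncomputable def fwd (p : List E) (x : List (Option E × List α)) : List (Option E × List α) :=
  p.foldl (fun x e => L.edge e x) x

/-- Transport back along an edge path. -/
noncomputable def bwd (p : List E) (x : List (Option E × List α)) : List (Option E × List α) :=
  p.foldr (fun e x => L.edge (D.bar e) x) x

theorem fwd_at (p : List E) : ∀ {u v x}, IsEdgePath (fun e => D.t (D.bar e)) D.t u p v →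
    x ∈ At D u → L.fwd p x ∈ At D v ∧ L.bwd p (L.fwd p x) = x := by
  induction p with
  | nil => rintro u v x rfl hx; exact ⟨hx, rfl⟩
  | cons e p ih =>
    rintro u v x ⟨rfl, hp⟩ hx
    obtain ⟨h1, h2⟩ := ih hp (L.edge_at hx)
    refine ⟨h1, ?_⟩
    change L.edge (D.bar e) (L.bwd p (L.fwd p (L.edge e x))) = x
    rw [h2, L.edge_edge hx.1]

theorem bwd_at (p : List E) : ∀ {u v x}, IsEdgePath (fun e => D.t (D.bar e)) D.t u p v →
    x ∈ At D v → L.bwd p x ∈ At D u ∧ L.fwd p (L.bwd p x) = x := by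
  induction p with
  | nil => rintro u v x rfl hx; exact ⟨hx, rfl⟩
  | cons e p ih =>
    rintro u v x ⟨rfl, hp⟩ hx
    obtain ⟨h1, h2⟩ := ih hp hx
    refine ⟨L.edge_at' h1, ?_⟩
    change L.fwd p (L.edge e (L.edge (D.bar e) (L.bwd p x))) = x
    rw [L.edge_edge' h1, h2]

end GraphData.Lift

/-! ### The permutation action and the normal form theorem -/

namespace GraphData.Lift

variable {Γ V E α M : Type} [Group Γ] {D : GraphData Γ V E α} [Group M] (L : D.Lift M)

theorem act_free {x} (hx : D.Valid x) : ∀ g ∈ L.G (D.endV x), L.act g x = x → g = 1 := by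
  have key : ∀ {j τ g}, L.cf j (wordVal L.π0 τ * g) = 1 →
      L.rep j (wordVal L.π0 τ * g) = τ → g = 1 := by
    intro j τ g h1 h2
    rw [cf, h2, mul_inv_eq_one] at h1
    simpa using h1
  induction hx with
  | base τ hτ =>
    intro g hg h
    have h2 : L.rep none (wordVal L.π0 τ * g) = τ := by simpa [act] using h
    refine key ?_ h2
    have := L.cf_mem (j := none) (mul_mem (L.NTr_mem none τ hτ) hg)
    rwa [L.A_none, Subgroup.mem_bot] at this
  | cons e τ j τ' r hr hj hτ hred ih =>
    intro g hg h
    simp only [act, List.cons.injEq, Prod.mk.injEq, true_and] at h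
    have hm := L.cf_mem (j := some e) (mul_mem (L.NTr_mem (some e) _ hτ) hg)
    have h1 := ih _ (by rw [endV, hj]; exact L.A_le _ (L.θ_mem _ _ hm)) h.2
    refine key ?_ h.1
    rw [← L.θ_θ e _ hm, h1, L.θ_one]

/-- A syllable is created by acting on the trivial syllable. -/
theorem act_word {j τ r} (hx : D.Valid ((j, τ) :: r)) :
    L.act (wordVal L.π0 τ) ((j, []) :: r) = (j, τ) :: r := by
  cases j with
  | none => rw [hx.tail_none, act, wordVal_nil, one_mul, L.rep_word hx.mem]
  | some e =>
    obtain ⟨j', τ', r', rfl, hv, -, -⟩ := hx.tail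
    rw [act, wordVal_nil, one_mul, L.rep_word hx.mem, L.cf_word hx.mem, L.θ_one, L.act_one hv]

/-- A choice of edge paths from the base vertex to all vertices such that transport along them is
compatible with crossing the edges of the spanning tree. -/
structure Paths (L : D.Lift M) where
  P : V → List E
  path : ∀ v, IsEdgePath (fun e => D.t (D.bar e)) D.t D.v0 (P v) v
  P_v0 : P D.v0 = []
  tree : ∀ e ∈ D.T, ∀ x ∈ At D D.v0, L.fwd (P (D.t e)) x = L.edge e (L.fwd (P (D.t (D.bar e))) x)

theorem isEdgePath_append {ι τ : E → V} (p : List E) (e : E) : ∀ {u},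
    IsEdgePath ι τ u (p ++ [e]) (τ e) ↔ IsEdgePath ι τ u p (ι e) := by
  induction p with
  | nil => intro u; simp [IsEdgePath, eq_comm]
  | cons f p ih => intro u; simp [IsEdgePath, ih]

/-- Reduced paths in the spanning tree qualify: of two such paths ending at the two ends of a tree
edge, one extends the other by that edge. -/
theorem exists_paths
    (htree : ∀ u v : V, ∃! p : List E, (∀ e ∈ p, e ∈ D.T) ∧
      IsEdgePath (fun e => D.t (D.bar e)) D.t u p v ∧ List.IsChain (fun e f => f ≠ D.bar e) p) :
    Nonempty L.Paths := by
  choose P hP hPu using fun v => htree D.v0 v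
  dsimp only at hP hPu
  refine ⟨⟨P, fun v => (hP v).2.1, ?_, ?_⟩⟩
  · exact (hPu D.v0 [] ⟨by simp, rfl, by simp⟩).symm
  · intro e he x hx
    obtain ⟨h1, h2, h3⟩ := hP (D.t (D.bar e))
    by_cases hlast : ∃ q, P (D.t (D.bar e)) = q ++ [D.bar e]
    · obtain ⟨q, hq⟩ := hlast
      rw [hq] at h1 h2 h3
      have hq2 : IsEdgePath (fun e => D.t (D.bar e)) D.t D.v0 q (D.t e) := by
        have := (isEdgePath_append (ι := fun e => D.t (D.bar e)) q (D.bar e)).1 h2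
        rwa [L.bar_bar] at this
      have := hPu (D.t e) q ⟨fun f hf => h1 f (by simp [hf]), hq2, h3.left_of_append⟩
      rw [hq, ← this]
      have hx' := (L.fwd_at q hq2 hx).1
      simp only [fwd, List.foldl_append, List.foldl_cons, List.foldl_nil]
      exact (L.edge_edge' hx').symm
    · have hq2 := (isEdgePath_append (ι := fun e => D.t (D.bar e)) _ e).2 h2
      have := hPu (D.t e) (P (D.t (D.bar e)) ++ [e]) ⟨?_, hq2, ?_⟩
      · rw [← this]
        simp [fwd]
      · intro f hf
        rcases List.mem_append.1 hf with hf | hf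
        · exact h1 f hf
        · obtain rfl : f = e := by simpa using hf
          exact he
      · rw [List.isChain_append]
        refine ⟨h3, by simp, ?_⟩
        intro f hf g hg
        obtain rfl : e = g := by simpa using hg
        intro hef
        apply hlast
        obtain ⟨q, hq⟩ := List.mem_getLast?_eq_getLast hf |> fun ⟨h, h'⟩ =>
          (⟨_, h' ▸ (List.dropLast_append_getLast h).symm⟩ : ∃ q, P (D.t (D.bar e)) = q ++ [f])
        refine ⟨q, ?_⟩
        have hbe : D.bar e = f := by rw [hef, L.bar_bar]
        exact hq.trans (by rw [hbe])

variable {L} (Q : L.Paths)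

namespace Paths

/-- Transport from the base vertex to `v` along the chosen path. -/
noncomputable def c (v : V) (x : List (Option E × List α)) := L.fwd (Q.P v) x

/-- Transport from `v` back to the base vertex. -/
noncomputable def d (v : V) (x : List (Option E × List α)) := L.bwd (Q.P v) x

theorem c_at {v x} (hx : x ∈ At D D.v0) : Q.c v x ∈ At D v := (L.fwd_at _ (Q.path v) hx).1

theorem d_c {v x} (hx : x ∈ At D D.v0) : Q.d v (Q.c v x) = x := (L.fwd_at _ (Q.path v) hx).2

theorem d_at {v x} (hx : x ∈ At D v) : Q.d v x ∈ At D D.v0 := (L.bwd_at _ (Q.path v) hx).1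

theorem c_d {v x} (hx : x ∈ At D v) : Q.c v (Q.d v x) = x := (L.bwd_at _ (Q.path v) hx).2

/-- For tree edges, the edge move corresponds to the identity under transport. -/
theorem d_edge {e} (he : e ∈ D.T) {x} (hx : x ∈ At D (D.t (D.bar e))) :
    Q.d (D.t e) (L.edge e x) = Q.d (D.t (D.bar e)) x := by
  have h1 := Q.d_at hx
  conv_lhs => rw [← Q.c_d hx]
  have := Q.tree e he _ h1
  change Q.c _ _ = L.edge e (Q.c _ _) at this
  rw [← this, Q.d_c h1]

/-- A vertex group acts on the reduced sequences at the base vertex by transport. -/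
noncomputable def permV (v : V) : L.G v →* Equiv.Perm (At D D.v0) where
  toFun g :=
    { toFun := fun x => ⟨Q.d v (L.act (g : M)⁻¹ (Q.c v x)),
        Q.d_at (L.act_at (Q.c_at x.2) (inv_mem g.2))⟩
      invFun := fun x => ⟨Q.d v (L.act (g : M) (Q.c v x)),
        Q.d_at (L.act_at (Q.c_at x.2) g.2)⟩
      left_inv := by
        rintro ⟨x, hx⟩
        have h := Q.c_at (v := v) hx
        simp only [Subtype.mk.injEq]
        rw [Q.c_d (L.act_at h (inv_mem g.2)), ← L.act_mul' h (inv_mem g.2) g.2,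
          inv_mul_cancel, L.act_one h.1, Q.d_c hx]
      right_inv := by
        rintro ⟨x, hx⟩
        have h := Q.c_at (v := v) hx
        simp only [Subtype.mk.injEq]
        rw [Q.c_d (L.act_at h g.2), ← L.act_mul' h g.2 (inv_mem g.2),
          mul_inv_cancel, L.act_one h.1, Q.d_c hx] }
  map_one' := by
    ext ⟨x, hx⟩ : 2
    have h := Q.c_at (v := v) hx
    simp only [OneMemClass.coe_one, inv_one, Equiv.coe_fn_mk, Equiv.Perm.coe_one, id_eq]
    rw [L.act_one h.1, Q.d_c hx]
  map_mul' g g' := by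
    ext ⟨x, hx⟩ : 2
    have h := Q.c_at (v := v) hx
    simp only [Equiv.coe_fn_mk, Equiv.Perm.coe_mul, Function.comp_apply]
    rw [Q.c_d (L.act_at h (inv_mem g'.2)), ← L.act_mul' h (inv_mem g'.2) (inv_mem g.2)]
    simp

/-- The edge moves act on the reduced sequences at the base vertex by transport. -/
noncomputable def permE (e : E) : Equiv.Perm (At D D.v0) where
  toFun x := ⟨Q.d (D.t (D.bar e)) (L.edge (D.bar e) (Q.c (D.t e) x)),
    Q.d_at (L.edge_at' (Q.c_at x.2))⟩
  invFun x := ⟨Q.d (D.t e) (L.edge e (Q.c (D.t (D.bar e)) x)),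
    Q.d_at (L.edge_at (Q.c_at x.2))⟩
  left_inv := by
    rintro ⟨x, hx⟩
    have h := Q.c_at (v := D.t e) hx
    simp only [Subtype.mk.injEq]
    rw [Q.c_d (L.edge_at' h), L.edge_edge' h, Q.d_c hx]
  right_inv := by
    rintro ⟨x, hx⟩
    have h := Q.c_at (v := D.t (D.bar e)) hx
    simp only [Subtype.mk.injEq]
    rw [Q.c_d (L.edge_at h), L.edge_edge h.1, Q.d_c hx]

theorem permV_inv (v : V) (g : L.G v) (x : At D D.v0) :
    (((Q.permV v g)⁻¹ x : At D D.v0) : List (Option E × List α)) =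
      Q.d v (L.act (g : M) (Q.c v x)) := rfl

theorem permE_inv (e : E) (x : At D D.v0) :
    (((Q.permE e)⁻¹ x : At D D.v0) : List (Option E × List α)) =
      Q.d (D.t e) (L.edge e (Q.c (D.t (D.bar e)) x)) := rfl

theorem permE_bar (e : E) : Q.permE (D.bar e) * Q.permE e = 1 := by
  rw [mul_eq_one_iff_eq_inv]
  ext ⟨x, hx⟩ : 2
  rw [permE_inv]
  change Q.d (D.t (D.bar (D.bar e))) (L.edge (D.bar (D.bar e)) (Q.c (D.t (D.bar e)) x)) = _
  rw [L.bar_bar]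

theorem permE_tree {e : E} (he : e ∈ D.T) : Q.permE e = 1 := by
  rw [← inv_eq_one]
  ext ⟨x, hx⟩ : 2
  rw [permE_inv, Q.d_edge he (Q.c_at hx), Q.d_c hx]
  rfl

/-- The conjugation relation of an edge. -/
theorem perm_conj (e : E) {a} (ha : a ∈ L.A (some e)) :
    Q.permE e * Q.permV (D.t e) ⟨a, L.A_le (some e) ha⟩ * (Q.permE e)⁻¹ =
      Q.permV (D.t (D.bar e)) ⟨L.θ e a, L.A_le (some (D.bar e)) (L.θ_mem e a ha)⟩ := by
  rw [mul_inv_eq_iff_eq_mul, ← inv_inj, mul_inv_rev, mul_inv_rev]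
  have hθ := L.A_le (some (D.bar e)) (L.θ_mem e a ha)
  ext ⟨x, hx⟩ : 2
  have h := Q.c_at (v := D.t (D.bar e)) hx
  rw [Equiv.Perm.mul_apply, Equiv.Perm.mul_apply, permV_inv, permE_inv, permE_inv, permV_inv]
  dsimp only
  rw [Q.c_d (L.edge_at h), Q.c_d (L.act_at h hθ), L.edge_act h.1 e ha]

variable {κ : M →* Γ} {Ψ : Γ →* Equiv.Perm (At D D.v0)}

/-- Let `Ψ` be an action of `Γ` given by `permV` and `permE` on the generators. The inverse of the
permutation belonging to the value of `x` moves the trivial sequence to `x`, transported to the base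
vertex. -/
theorem perm_sval (hπ : ∀ a, D.π a = κ (L.π0 a))
    (hV : ∀ v (g : L.G v), Ψ (κ g) = Q.permV v g) (hE : ∀ e, Ψ (D.s e) = Q.permE e)
    {x} (hx : D.Valid x) :
    (((Ψ (D.sval x))⁻¹ ⟨[(none, [])], .base _ (L.NTr_nil _), rfl⟩ : At D D.v0) :
      List (Option E × List α)) = Q.d (D.endV x) x := by
  have hw : ∀ w : List α, wordVal D.π w = κ (wordVal L.π0 w) := by
    intro w
    simp only [wordVal, map_list_prod, List.map_map]
    congr 1
    exact List.map_congr_left fun a _ => hπ a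
  induction hx with
  | base τ hτ =>
    have e1 : D.sval [(none, τ)] = κ (wordVal L.π0 τ) := by
      simp [sval, sj, hw]
    rw [e1]
    have := hV D.v0 ⟨wordVal L.π0 τ, L.NTr_mem none τ hτ⟩
    dsimp only at this
    rw [this, permV_inv]
    have hc : Q.c D.v0 [(none, [])] = [(none, [])] := by simp [c, Q.P_v0, fwd]
    dsimp only
    rw [hc, L.act_word (.base _ hτ)]
    rfl
  | cons e τ j τ' r hr hj hτ hred ih =>
    have e1 : D.sval ((some e, τ) :: (j, τ') :: r) =
      D.sval ((j, τ') :: r) * D.s e * κ (wordVal L.π0 τ) := by rw [← hw]; rfl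
    have hat : (j, τ') :: r ∈ At D (D.t (D.bar e)) := ⟨hr, hj⟩
    have hV' := hV (D.t e) ⟨wordVal L.π0 τ, L.NTr_mem (some e) τ hτ⟩
    dsimp only at hV'
    rw [e1, map_mul, map_mul, hV', hE, mul_inv_rev, mul_inv_rev, Equiv.Perm.mul_apply,
      Equiv.Perm.mul_apply, permV_inv, permE_inv, ih]
    have h2 : D.endV ((j, τ') :: r) = D.t (D.bar e) := hj
    rw [h2, Q.c_d hat, Q.c_d (L.edge_at hat)]
    have h3 : L.edge e ((j, τ') :: r) = (some e, []) :: (j, τ') :: r := by simp [edge, hred]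
    rw [h3, L.act_word (.cons _ _ _ _ _ hr hj hτ hred)]
    rfl

/-- The normal form theorem: a reduced sequence is determined by its end vertex and its value. -/
theorem sval_inj (hπ : ∀ a, D.π a = κ (L.π0 a))
    (hV : ∀ v (g : L.G v), Ψ (κ g) = Q.permV v g) (hE : ∀ e, Ψ (D.s e) = Q.permE e)
    {x x'} (hx : D.Valid x) (hx' : D.Valid x') (he : D.endV x = D.endV x')
    (hs : D.sval x = D.sval x') : x = x' := by
  have h1 := Q.perm_sval hπ hV hE hx
  have h2 := Q.perm_sval hπ hV hE hx'
  rw [hs, h2, he] at h1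
  have h3 : x ∈ At D (D.endV x') := ⟨hx, he⟩
  have h4 : x' ∈ At D (D.endV x') := ⟨hx', rfl⟩
  rw [← Q.c_d h3, ← h1, Q.c_d h4]

/-- Vertex groups act faithfully. -/
theorem κ_inj (hV : ∀ v (g : L.G v), Ψ (κ g) = Q.permV v g) {v : V} {g : M} (hg : g ∈ L.G v)
    (h : κ g = 1) : g = 1 := by
  have h1 := hV v ⟨g, hg⟩
  dsimp only at h1
  rw [h, map_one, eq_comm, ← inv_eq_one] at h1
  have hx0 : [(none, [])] ∈ At D D.v0 := ⟨.base _ (L.NTr_nil _), rfl⟩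
  have hx := Q.c_at (v := v) hx0
  have h2 := congrArg (Subtype.val) (congrArg (fun σ : Equiv.Perm (At D D.v0) => σ ⟨_, hx0⟩) h1)
  rw [permV_inv] at h2
  have h3 := congrArg (Q.c v) h2
  rw [Q.c_d (L.act_at hx hg)] at h3
  exact L.act_free hx.1 g (by rwa [hx.2]) h3

end Paths
end GraphData.Lift

/-! ### The data extracted from an autostackable structure respecting a subgroup -/

/-- The part of an autostackable structure of `G` respecting `H` that enters the construction: the
transversal `N` for the right cosets of `H`, the stacking function on it (letter first), and the
set `B` of those letters that generate `H`. -/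
structure LocalData (G : Type) [Group G] (H : Subgroup G) (A : Type) where
  π : A → G
  inv : A → A
  N : Set (List A)
  phi : A → List A → List A
  B : Set A
  K : ℕ
  π_ne : ∀ a, π a ≠ 1
  inv_inv : ∀ a, inv (inv a) = a
  π_inv : ∀ a, π (inv a) = (π a)⁻¹
  N_nil : [] ∈ N
  N_closed : PrefixClosed N
  N_rep : ∀ g, ∃ w ∈ N, wordVal π w * g⁻¹ ∈ H
  N_uniq : ∀ w ∈ N, ∀ w' ∈ N, wordVal π w * (wordVal π w')⁻¹ ∈ H → w = w'
  B_H : ∀ a ∈ B, π a ∈ H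
  words : ∀ g, ∃ w, wordVal π w = g
  phi_val : ∀ a, ∀ τ ∈ N, wordVal π (phi a τ) = π a
  phi_len : ∀ a, ∀ τ ∈ N, (phi a τ).length ≤ K
  phi_F2 : ∀ a, ∀ τ ∈ N, (τ ++ [a] ∈ N ∨ ∃ τ', τ = τ' ++ [inv a]) → phi a τ = [a]
  wf : WellFounded (fun q p : G × A => ∃ τ ∈ N, wordVal π τ * p.1⁻¹ ∈ H ∧ ¬ (τ = [] ∧ p.2 ∈ B) ∧
    τ ++ [p.2] ∉ N ∧ (¬ ∃ τ', τ = τ' ++ [inv p.2]) ∧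
    ∃ u u', phi p.2 τ = u ++ q.2 :: u' ∧ q.1 = p.1 * wordVal π u)
  reg : FinObs (fun w => (w ∈ N, fun a => {z | w ∈ N ∧ z = phi a w}))

theorem PrefixClosed.nil {α : Type} {N : Set (List α)} (h : PrefixClosed N) {w} (hw : w ∈ N) :
    [] ∈ N := h w hw [] ⟨w, rfl⟩

/-- An autostackable structure respects the trivial subgroup. -/
theorem AutostackableRespecting.bot {G : Type} [Group G] {H : Subgroup G}
    (h : AutostackableRespecting G H) : AutostackableRespecting G ⊥ := by
  obtain ⟨α, hα, π, inv, st, hst, hauto, -⟩ := h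
  refine ⟨α, hα, π, inv, st, hst, hauto, ∅, by simp, by simp, by simp, {[]}, st.N, by simp, ?_, ?_,
    hst.prefixClosed, ?_, by simp, by simp, ?_⟩
  · rintro w rfl p hp
    simpa using hp
  · intro h hh
    rw [Subgroup.mem_bot] at hh
    subst hh
    exact ⟨[], ⟨rfl, rfl⟩, fun w hw => hw.1⟩
  · intro g
    simpa only [Subgroup.mem_bot, mul_inv_eq_one] using hst.nf g
  · rintro a y hy y' hy' - hh
    obtain ⟨h, hh, he⟩ := hh
    rw [Subgroup.mem_bot] at hh
    subst hh
    rw [one_mul] at he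
    rw [(hst.nf (wordVal π y)).unique ⟨hy', he⟩ ⟨hy, rfl⟩]

/-- The local data of an autostackable structure respecting `H`. The transversal consists of the
normal forms which do not begin with a letter of `B`, which makes it regular. The reduction on
`G × A` lifts to the reduction on normal forms, since by translation invariance the stacking function
depends on the transversal part of a normal form only. -/
theorem AutostackableRespecting.localData {G : Type} [Group G] {H : Subgroup G}
    (h : AutostackableRespecting G H) :
    ∃ (A : Type) (_ : Fintype A), Nonempty (LocalData G H A) := by
  obtain ⟨A, hA, π, inv, st, hst, hauto, B, hBinv, hBH, -, NH, NTr, hNHB, hNHp, hNH, hTp, hT, hN,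
    -, hinvar⟩ := h
  have hNH_nil : [] ∈ NH := by
    obtain ⟨w, hw, -⟩ := hNH 1 (one_mem _)
    exact hNHp.nil hw.1
  have hT_nil : [] ∈ NTr := by
    obtain ⟨w, hw, -⟩ := hT 1
    exact hTp.nil hw.1
  have hTuniq : ∀ w ∈ NTr, ∀ w' ∈ NTr, wordVal π w * (wordVal π w')⁻¹ ∈ H → w = w' :=
    fun w hw w' hw' h => (hT (wordVal π w')).unique ⟨hw, h⟩ ⟨hw', by simp⟩
  have hTN : ∀ w ∈ NTr, w ∈ st.N := fun w hw => by
    rw [hN]; exact ⟨[], hNH_nil, w, hw, rfl⟩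
  have hBval : ∀ w : List A, (∀ b ∈ w, b ∈ B) → wordVal π w ∈ H := by
    intro w hw
    exact Subgroup.list_prod_mem _ (by
      intro x hx
      obtain ⟨b, hb, rfl⟩ := List.mem_map.1 hx
      exact hBH b (hw b hb))
  have hT_H : ∀ w ∈ NTr, wordVal π w ∈ H → w = [] := fun w hw h =>
    hTuniq w hw [] hT_nil (by simpa [wordVal_nil] using h)
  have hTiff : ∀ w, w ∈ NTr ↔ w ∈ st.N ∧ ∀ b ∈ w.head?, b ∉ B := by
    intro w
    refine ⟨fun hw => ⟨hTN w hw, ?_⟩, ?_⟩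
    · intro b hb hbB
      cases w with
      | nil => simp at hb
      | cons c w =>
        obtain rfl : c = b := by simpa using hb
        have := hT_H [c] (hTp _ hw _ ⟨w, rfl⟩) (by simpa [wordVal_singleton] using hBH c hbB)
        simp at this
    · rintro ⟨hw, hb⟩
      rw [hN] at hw
      obtain ⟨u, hu, v, hv, rfl⟩ := hw
      cases u with
      | nil => exact hv
      | cons c u => exact absurd (hNHB _ hu c (by simp)) (hb c (by simp))
  have hnf : ∀ g, ∃ w, w ∈ st.N ∧ wordVal π w = g := fun g => (hst.nf g).exists
  refine ⟨A, hA, ⟨{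
    π := π
    inv := inv
    N := NTr
    phi := fun a y => st.phi y a
    B := B
    K := st.K
    π_ne := hst.gen.ne_one
    inv_inv := hst.gen.inv_invol
    π_inv := hst.gen.val_inv
    N_nil := hT_nil
    N_closed := hTp
    N_rep := fun g => ?_
    N_uniq := hTuniq
    B_H := hBH
    words := fun g => ?_
    phi_val := fun a τ hτ => (hst.F1 τ (hTN τ hτ) a).1
    phi_len := fun a τ hτ => (hst.F1 τ (hTN τ hτ) a).2
    phi_F2 := fun a τ hτ h => hst.F2 τ (hTN τ hτ) a (h.imp_left (hTN _))
    wf := ?_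
    reg := ?_ }⟩⟩
  · exact (hT g).exists
  · exact (hnf g).imp fun w hw => hw.2
  · -- A descending chain would, through normal forms, contradict termination in `G`.
    rw [wellFounded_iff_isEmpty_descending_chain]
    refine ⟨fun ⟨x, hx⟩ => hst.F3 ?_⟩
    choose nf hnfN hnfv using hnf
    refine ⟨fun i => (nf (x i).1, (x i).2), fun i => ?_⟩
    obtain ⟨τ, hτ, hτH, hτB, hτa, hτi, u, u', hphi, hq⟩ := hx i
    dsimp only
    -- The normal form of `(x i).1` is `h ++ τ` with `h` a word in the letters of `H`.
    obtain ⟨h, hh, v, hv, e⟩ : ∃ h ∈ NH, ∃ v ∈ NTr, nf (x i).1 = h ++ v := by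
      have := hnfN (x i).1
      rwa [hN] at this
    have hcoset : ∀ h ∈ NH, ∀ v ∈ NTr, wordVal π (h ++ v) = (x i).1 → v = τ := by
      intro h hh v hv e
      refine hTuniq _ hv _ hτ ?_
      have h2 := hBval h (hNHB h hh)
      rw [← e, wordVal_append, mul_inv_rev] at hτH
      have := inv_mem (mul_mem hτH h2)
      simpa [mul_assoc] using this
    obtain rfl : v = τ := hcoset h hh v hv (by rw [← e, hnfv])
    have hv_H : wordVal π v ∈ H → v = [] := hT_H v hv
    have hlast : ∀ c, h ++ v = [] ++ [c] ∨ (∃ y, h ++ v = y ++ [c]) → v = [] ∧ c ∈ B ∨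
        ∃ y, v = y ++ [c] := by
      intro c hc
      obtain ⟨y, hy⟩ : ∃ y, h ++ v = y ++ [c] := hc.elim (fun h => ⟨_, h⟩) id
      rcases List.eq_nil_or_concat v with rfl | ⟨v', d, rfl⟩
      · left
        rw [List.append_nil] at hy
        exact ⟨rfl, hNHB h hh c (by simp [hy])⟩
      · right
        rw [List.concat_eq_append, ← List.append_assoc] at hy
        obtain ⟨-, h3⟩ := List.append_inj' hy rfl
        exact ⟨v', by rw [List.concat_eq_append, h3]⟩
    refine ⟨hnfN _, ?_, ?_, u, u', ?_, hnfN _, ?_⟩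
    · rw [hN]
      rintro ⟨h', hh', v', hv', e'⟩
      rcases List.eq_nil_or_concat v' with rfl | ⟨v'', d, rfl⟩
      · rw [List.append_nil] at e'
        have hB : ∀ b ∈ v ++ [(x i).2], b ∈ B := fun b hb => hNHB h' hh' b (by
          rw [← e', e]; simp only [List.append_assoc, List.mem_append] at hb ⊢; tauto)
        exact hτB ⟨hv_H (hBval v fun b hb => hB b (by simp [hb])), hB _ (by simp)⟩
      · rw [List.concat_eq_append] at e' hv'
        rw [← List.append_assoc] at e'
        obtain ⟨h2, h3⟩ := List.append_inj' e' rfl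
        have h4 := hcoset h' hh' v'' (hTp _ hv' _ ⟨_, rfl⟩) (by rw [← h2, hnfv])
        rw [h4, ← h3] at hv'
        exact hτa hv'
    · rw [e]
      intro hy
      rcases hlast _ (Or.inr hy) with ⟨h1, h2⟩ | h1
      · exact hτB ⟨h1, by simpa [hst.gen.inv_invol] using hBinv _ h2⟩
      · exact hτi h1
    · rw [← hphi]
      refine hinvar _ v (hTN v hv) _ (hnfN _) (fun h => hτB ⟨hv_H h.1, h.2⟩)
        ⟨wordVal π h, hBval h (hNHB h hh), ?_⟩
      rw [e, wordVal_append]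
    · rw [hnfv, wordVal_append, hnfv, hq]
  · refine FinObs.of_imp (hauto.1.finObs.prod (finObs_head?.prod
      (FinObs.pi (SyncRegular3.finObs_phi (fun y hy a => (hst.F1 y hy a).2) hauto.2)))) ?_
    intro w w' hw
    simp only [Prod.mk.injEq] at hw ⊢
    obtain ⟨h1, h2, h3⟩ := hw
    have h4 : (w ∈ NTr) = (w' ∈ NTr) := by rw [hTiff, hTiff, h1, h2]
    refine ⟨h4, ?_⟩
    funext a
    ext z
    have h5 := congrArg (fun s => z ∈ s) (congrFun h3 a)
    simp only [Set.mem_ofPred_eq] at h5 ⊢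
    rw [h4]
    refine and_congr_right fun h6 => ?_
    have h7 := hTN _ h6
    have h8 := hTN w (by rwa [h4])
    simpa [h7, h8] using h5

/-! ### Assembling the local data -/

section Assemble

/-- The terminal vertices of the edges, extended by a base vertex. -/
def extT {V E : Type} (t : E → V) (v0 : V) : Option E → V
  | none => v0
  | some e => t e

/-- The part of a word over a disjoint union of alphabets that belongs to the `j`-th one. -/
def unl {J : Type} [DecidableEq J] {A : J → Type} (j : J) (w : List (Σ j, A j)) : List (A j) :=
  (w.map (fun a : Σ j, A j => if h : a.1 = j then some (h ▸ a.2) else none)).reduceOption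

theorem unl_map {J : Type} [DecidableEq J] {A : J → Type} (j : J) (w : List (A j)) :
    unl j (w.map (Sigma.mk j)) = w := by
  induction w with
  | nil => rfl
  | cons a w ih =>
    simp only [unl, List.map_cons, dite_true, List.reduceOption_cons_of_some] at ih ⊢
    rw [ih]

theorem map_unl {J : Type} [DecidableEq J] {A : J → Type} (j : J) (w : List (Σ j, A j))
    (hw : ∀ a ∈ w, a.1 = j) : (unl j w).map (Sigma.mk j) = w := by
  obtain ⟨w, rfl⟩ : ∃ w' : List (A j), w = w'.map (Sigma.mk j) := by
    induction w with
    | nil => exact ⟨[], rfl⟩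
    | cons a w ih =>
      obtain ⟨w', rfl⟩ := ih fun b hb => hw b (by simp [hb])
      obtain ⟨i, a⟩ := a
      obtain rfl : i = j := hw ⟨i, a⟩ (by simp)
      exact ⟨(a :: w' : List (A i)), rfl⟩
  rw [unl_map]

theorem map_sigma_inj {J : Type} {A : J → Type} {j : J} {w w' : List (A j)}
    (h : w.map (Sigma.mk j) = w'.map (Sigma.mk j)) : w = w' :=
  List.map_injective_iff.2 sigma_mk_injective h

variable {Γ V E : Type} [Group Γ] [Fintype E] [DecidableEq E] {Gv : V → Type}
  [∀ v, Group (Gv v)] {A : Option E → Type} (bar : E → E) (t : E → V) (T : Set E)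
  (bar_nT : ∀ e, e ∉ T → bar e ∉ T) (v0 : V) (ι : ∀ v, Gv v →* Γ) (s : E → Γ)
  {HH : ∀ j : Option E, Subgroup (Gv (extT t v0 j))}
  (loc : ∀ j, LocalData (Gv (extT t v0 j)) (HH j) (A j))

/-- The data in `Γ` obtained from the local data of the vertex groups along `ι`. -/
def mkData : GraphData Γ V E (Σ j, A j) where
  bar := bar
  t := t
  T := T
  v0 := v0
  Gs v := (ι v).range
  s := s
  H j := (HH j).map (ι (extT t v0 j))
  lab := Sigma.fst
  π a := ι _ ((loc a.1).π a.2)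
  inv a := ⟨a.1, (loc a.1).inv a.2⟩
  NTr j := List.map (Sigma.mk j) '' (loc j).N
  phi a w := ((loc a.1).phi a.2 (unl a.1 w)).map (Sigma.mk a.1)
  B := {a | a.2 ∈ (loc a.1).B}
  K := Finset.univ.sup fun j => (loc j).K
  bar_nT := bar_nT

theorem tt_mkData (j) : (mkData bar t T bar_nT v0 ι s loc).tt j = extT t v0 j := by
  cases j <;> rfl

omit [Fintype E] [DecidableEq E] in
theorem wordVal_mk {P : Type} [Group P] (κ : ∀ v, Gv v →* P) (j) (w : List (A j)) :
    wordVal (fun a : Σ j, A j => κ (extT t v0 a.1) ((loc a.1).π a.2)) (w.map (Sigma.mk j)) =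
      κ _ (wordVal (loc j).π w) := by
  simp only [wordVal, map_list_prod, List.map_map]
  rfl

theorem exists_snoc_map {J : Type} {A : J → Type} {j : J} {w : List (A j)} {a : A j}
    (h : ∃ τ', w.map (Sigma.mk j) = τ' ++ [⟨j, a⟩]) : ∃ τ', w = τ' ++ [a] := by
  obtain ⟨τ', h⟩ := h
  obtain ⟨w1, w2, rfl, rfl, h2⟩ := List.map_eq_append_iff.1 h
  have : w2 = [a] := map_sigma_inj (j := j) h2
  exact ⟨w1, by rw [this]⟩

theorem snoc_mem_map {J : Type} {A : J → Type} {j : J} {N : Set (List (A j))} {w : List (A j)}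
    {a : A j} : w.map (Sigma.mk j) ++ [⟨j, a⟩] ∈ List.map (Sigma.mk j) '' N ↔ w ++ [a] ∈ N := by
  constructor
  · rintro ⟨w', hw', h⟩
    have : w' = w ++ [a] := map_sigma_inj (j := j) (by simpa using h)
    rwa [← this]
  · intro h
    exact ⟨_, h, by simp⟩

theorem mkData_acc (hι : ∀ v, Function.Injective (ι v)) (j) (p : Gv (extT t v0 j) × A j) :
    Acc (mkData bar t T bar_nT v0 ι s loc).Step (ι _ p.1, ⟨j, p.2⟩) := by
  induction p using (loc j).wf.induction with
  | _ p ih =>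
    obtain ⟨x, a⟩ := p
    constructor
    rintro ⟨q1, q2⟩ ⟨_, ⟨(τ : List (A j)), hτ, rfl⟩, hH, hB, hN, hinv, u, u', hphi, hq⟩
    simp only [mkData] at hH hB hN hinv hphi hq
    rw [wordVal_mk, ← map_inv, ← map_mul] at hH
    obtain ⟨h, hh, hh'⟩ := hH
    have := hι _ hh'
    subst this
    rw [unl_map] at hphi
    obtain ⟨u, w, hu, rfl, hw⟩ := List.map_eq_append_iff.1 hphi
    obtain ⟨b, u', rfl, rfl, rfl⟩ := List.map_eq_cons_iff.1 hw
    rw [wordVal_mk, ← map_mul] at hq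
    subst hq
    refine ih (x * wordVal _ u, b) ⟨τ, hτ, hh, ?_, ?_, ?_, u, u', hu, rfl⟩
    · rintro ⟨rfl, h⟩
      exact hB ⟨rfl, h⟩
    · rwa [snoc_mem_map] at hN
    · rintro ⟨τ', rfl⟩
      exact hinv ⟨τ'.map (Sigma.mk j), by simp⟩

theorem mkData_reg : FinObs (fun w => ((fun j => w ∈ (mkData bar t T bar_nT v0 ι s loc).NTr j :
      Option E → Prop), fun a => {z | w ∈ (mkData bar t T bar_nT v0 ι s loc).NTr
        ((mkData bar t T bar_nT v0 ι s loc).lab a) ∧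
          z = (mkData bar t T bar_nT v0 ι s loc).phi a w})) := by
  have hmem : ∀ j w, w ∈ (mkData bar t T bar_nT v0 ι s loc).NTr j ↔
      none ∉ w.map (fun a : Σ j, A j => if h : a.1 = j then some (h ▸ a.2 : A j) else none) ∧
        unl j w ∈ (loc j).N := by
    intro j w
    constructor
    · rintro ⟨w, hw, rfl⟩
      rw [unl_map]
      exact ⟨by simp, hw⟩
    · rintro ⟨h1, h2⟩
      refine ⟨_, h2, map_unl j w ?_⟩
      intro a ha
      by_contra hne
      exact h1 (List.mem_map.2 ⟨a, ha, by rw [dif_neg hne]⟩)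
  refine FinObs.of_imp (FinObs.pi fun j => (finObs_tape
    (fun a : Σ j, A j => if h : a.1 = j then some (h ▸ a.2 : A j) else none)).prod
      (finObs_reduce (fun a : Σ j, A j => if h : a.1 = j then some (h ▸ a.2 : A j) else none)
        (loc j).reg)) ?_
  intro w w' hw
  have hw' := fun j => congrFun hw j
  simp only [Prod.mk.injEq] at hw'
  have h1 : ∀ j, (w ∈ (mkData bar t T bar_nT v0 ι s loc).NTr j) =
      (w' ∈ (mkData bar t T bar_nT v0 ι s loc).NTr j) := by
    intro j
    rw [hmem, hmem, (hw' j).1.2]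
    congr 1
    exact (hw' j).2.1
  rw [Prod.mk.injEq]
  refine ⟨funext h1, ?_⟩
  funext ⟨j, a⟩
  ext z
  simp only [Set.mem_ofPred_eq]
  rw [show (mkData bar t T bar_nT v0 ι s loc).lab ⟨j, a⟩ = j from rfl, h1]
  refine and_congr_right fun h2 => ?_
  have h3 := congrArg (fun s => (loc j).phi a (unl j w) ∈ s) (congrFun (hw' j).2.2 a)
  have h5 : unl j w ∈ (loc j).N := ((hmem j w).1 (by rwa [h1])).2
  have h4 : (loc j).phi a (unl j w) = (loc j).phi a (unl j w') := by
    have := (Eq.to_iff h3).1 ⟨h5, rfl⟩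
    exact this.2
  simp only [mkData, h4]

/-- The data is good as soon as the vertex groups embed, the edge elements satisfy the defining
relations, and the normal form theorem holds. -/
theorem mkData_good (hι : ∀ v, Function.Injective (ι v))
    (bar_bar : ∀ e, bar (bar e) = e) (bar_T : ∀ e ∈ T, bar e ∈ T)
    (s_T : ∀ e ∈ T, s e = 1) (s_bar : ∀ e, s (bar e) = (s e)⁻¹)
    (tree : ∀ u v, ∃ p : List E, (∀ e ∈ p, e ∈ T) ∧
      IsEdgePath (fun e => t (bar e)) t u p v ∧ List.IsChain (fun e f => f ≠ bar e) p)
    (htsurj : ∀ v, ∃ j, extT t v0 j = v)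
    (gen : Subgroup.closure ((⋃ v, Set.range (ι v)) ∪ Set.range s) = ⊤)
    (H_none : HH none = ⊥)
    (conj : ∀ e, ∀ h ∈ HH (some e), ∃ h' ∈ HH (some (bar e)),
      s e * ι (t e) h * (s e)⁻¹ = ι (t (bar e)) h')
    (uniq : ∀ x x', (mkData bar t T bar_nT v0 ι s loc).Valid x →
      (mkData bar t T bar_nT v0 ι s loc).Valid x' →
      (mkData bar t T bar_nT v0 ι s loc).endV x = (mkData bar t T bar_nT v0 ι s loc).endV x' →
      (mkData bar t T bar_nT v0 ι s loc).sval x = (mkData bar t T bar_nT v0 ι s loc).sval x' →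
      x = x') :
    (mkData bar t T bar_nT v0 ι s loc).Good where
  bar_bar := bar_bar
  bar_T := bar_T
  s_T := s_T
  s_bar := s_bar
  tree := tree
  gen := by
    rw [eq_top_iff, ← gen, Subgroup.closure_le]
    rintro x (hx | hx)
    · obtain ⟨v, g, rfl⟩ := Set.mem_iUnion.1 hx
      obtain ⟨j, rfl⟩ := htsurj v
      obtain ⟨w, rfl⟩ := (loc j).words g
      rw [← wordVal_mk t v0 loc ι]
      refine Subgroup.list_prod_mem _ ?_
      intro y hy
      obtain ⟨a, -, rfl⟩ := List.mem_map.1 hy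
      exact Subgroup.subset_closure (Or.inl ⟨a, rfl⟩)
    · exact Subgroup.subset_closure (Or.inr hx)
  π_ne a := by
    intro h
    exact (loc a.1).π_ne a.2 (hι _ (h.trans (map_one _).symm))
  inv_inv a := by
    simp only [mkData]
    rw [(loc a.1).inv_inv]
  π_inv a := by
    simp only [mkData]
    rw [(loc a.1).π_inv, map_inv]
  lab_inv a := rfl
  π_mem a := by
    rw [tt_mkData]
    exact ⟨_, rfl⟩
  H_none := by
    change (HH none).map _ = ⊥
    rw [H_none, Subgroup.map_bot]
  H_le j := by
    rw [tt_mkData]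
    rintro _ ⟨x, -, rfl⟩
    exact ⟨x, rfl⟩
  conj e := by
    rintro _ ⟨x, hx, rfl⟩
    obtain ⟨h', hh', he⟩ := conj e x hx
    exact ⟨h', hh', he.symm⟩
  NTr_lab j := by
    rintro _ ⟨w, -, rfl⟩ b hb
    obtain ⟨a, -, rfl⟩ := List.mem_map.1 hb
    rfl
  NTr_closed j := by
    rintro _ ⟨w, hw, rfl⟩ p ⟨q, hp⟩
    obtain ⟨w1, w2, rfl, rfl, -⟩ := List.map_eq_append_iff.1 hp.symm
    exact ⟨w1, (loc j).N_closed _ hw _ ⟨_, rfl⟩, rfl⟩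
  NTr_rep j := by
    intro g hg
    rw [tt_mkData] at hg
    obtain ⟨g, rfl⟩ := hg
    obtain ⟨w, hw, h⟩ := (loc j).N_rep g
    refine ⟨_, ⟨w, hw, rfl⟩, _, h, ?_⟩
    rw [map_mul, map_inv, ← wordVal_mk t v0 loc ι]
    rfl
  NTr_uniq j := by
    rintro _ ⟨w, hw, rfl⟩ _ ⟨w', hw', rfl⟩ ⟨h, hh, e⟩
    have e' : ι _ h = ι _ (wordVal (loc j).π w * (wordVal (loc j).π w')⁻¹) := by
      rw [map_mul, map_inv, ← wordVal_mk t v0 loc ι, ← wordVal_mk t v0 loc ι]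
      exact e
    rw [(loc j).N_uniq w hw w' hw' (hι _ e' ▸ hh)]
  B_H a ha := ⟨_, (loc a.1).B_H a.2 ha, rfl⟩
  words j := by
    intro g hg
    rw [tt_mkData] at hg
    obtain ⟨g, rfl⟩ := hg
    obtain ⟨w, rfl⟩ := (loc j).words g
    refine ⟨w.map (Sigma.mk j), ?_, wordVal_mk t v0 loc ι j w⟩
    intro b hb
    obtain ⟨a, -, rfl⟩ := List.mem_map.1 hb
    rfl
  phi_lab a := by
    rintro _ ⟨w, -, rfl⟩ c hc
    obtain ⟨b, -, rfl⟩ := List.mem_map.1 hc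
    rfl
  phi_val a := by
    rintro _ ⟨(w : List (A a.1)), hw, rfl⟩
    have := wordVal_mk t v0 loc ι a.1 ((loc a.1).phi a.2 w)
    simp only [mkData, unl_map]
    rw [this, (loc a.1).phi_val _ _ hw]
  phi_len a := by
    rintro _ ⟨(w : List (A a.1)), hw, rfl⟩
    simp only [mkData, unl_map, List.length_map]
    exact ((loc a.1).phi_len _ _ hw).trans
      (Finset.le_sup (f := fun j => (loc j).K) (Finset.mem_univ a.1))
  phi_F2 a := by
    rintro _ ⟨(w : List (A a.1)), hw, rfl⟩ h
    simp only [mkData, unl_map]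
    rw [(loc a.1).phi_F2 _ _ hw]
    · rfl
    · exact h.imp (fun h => snoc_mem_map.1 h) (fun h => exists_snoc_map h)
  acc a := by
    intro g hg
    rw [tt_mkData] at hg
    obtain ⟨g, rfl⟩ := hg
    exact mkData_acc bar t T bar_nT v0 ι s loc hι a.1 (g, a.2)
  reg := mkData_reg bar t T bar_nT v0 ι s loc
  uniq := uniq

end Assemble

/-! ### The fundamental group of a graph of groups -/

section Fundamental

variable {V E : Type} (bar : E → E) (t : E → V)
  (Gv : V → Type) [instGv : ∀ v, Group (Gv v)]
  (Ge : E → Type) [instGe : ∀ e, Group (Ge e)]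
  (T : Set E) (η : ∀ e, Ge e →* Gv (t e)) (hGe : ∀ e, Ge (bar e) = Ge e)

theorem cast_mul_of_heq {X Y : Type} [iX : Group X] [iY : Group Y] (h : X = Y) (hi : HEq iX iY)
    (a b : X) : cast h (a * b) = cast h a * cast h b := by
  subst h
  obtain rfl := eq_of_heq hi
  rfl

/-- The embedding of the edge group of `e` in the vertex group at the start of `e`. -/
def etaBar (e : E) (g : Ge e) : Gv (t (bar e)) := η (bar e) (cast (hGe e).symm g)

variable {bar t Gv Ge T η hGe}

theorem etaBar_mul (hGrpBar : ∀ e, HEq (instGe (bar e)) (instGe e)) (e : E) (g g' : Ge e) :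
    etaBar bar t Gv Ge η hGe e (g * g') =
      etaBar bar t Gv Ge η hGe e g * etaBar bar t Gv Ge η hGe e g' := by
  rw [etaBar, cast_mul_of_heq _ (hGrpBar e).symm, map_mul, etaBar, etaBar]

theorem etaBar_inj (hηinj : ∀ e, Function.Injective (η e)) (e : E) :
    Function.Injective (etaBar bar t Gv Ge η hGe e) := fun _ _ h =>
  (cast_bijective _).injective (hηinj (bar e) h)

theorem etaBar_surj (e : E) (g : Ge (bar e)) : ∃ g', etaBar bar t Gv Ge η hGe e g' = η (bar e) g :=
  ⟨cast (hGe e) g, by simp [etaBar]⟩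

theorem etaBar_bar (hbar : ∀ e, bar (bar e) = e) (e : E) (g : Ge e) :
    (Monoid.CoprodI.of (etaBar bar t Gv Ge η hGe (bar e) (cast (hGe e).symm g)) :
      Monoid.CoprodI Gv) = Monoid.CoprodI.of (η e g) := by
  have key : ∀ (e' : E) (_ : e' = e) (g' : Ge e'), HEq g' g →
      (Monoid.CoprodI.of (η e' g') : Monoid.CoprodI Gv) = Monoid.CoprodI.of (η e g) := by
    rintro e' rfl g' h
    rw [eq_of_heq h]
  exact key _ (hbar e) _ ((cast_heq _ _).trans (cast_heq _ _))

variable (bar t Gv Ge T η hGe)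

/-- The quotient map onto the fundamental group. -/
def gogQuo : GoGBase Gv T →* GoGFund bar t Gv Ge T η hGe :=
  QuotientGroup.mk' (Subgroup.normalClosure (gogRels bar t Gv Ge T η hGe))

/-- The map from the free product of the vertex groups to the fundamental group. -/
def gogKappa : Monoid.CoprodI Gv →* GoGFund bar t Gv Ge T η hGe :=
  (gogQuo bar t Gv Ge T η hGe).comp
    (Monoid.Coprod.inl : _ →* Monoid.Coprod (Monoid.CoprodI Gv) (FreeGroup {e : E // e ∉ T}))

/-- The map from a vertex group to the fundamental group. -/
def gogVert (v : V) : Gv v →* GoGFund bar t Gv Ge T η hGe :=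
  (gogKappa bar t Gv Ge T η hGe).comp Monoid.CoprodI.of

open Classical in
/-- The element of the fundamental group belonging to an edge, trivial for tree edges. -/
noncomputable def gogEdge (e : E) : GoGFund bar t Gv Ge T η hGe :=
  if h : e ∈ T then 1 else gogQuo bar t Gv Ge T η hGe (gogEin Gv T ⟨e, h⟩)

variable {bar t Gv Ge T η hGe}

theorem gogQuo_rel {x} (hx : x ∈ gogRels bar t Gv Ge T η hGe) :
    gogQuo bar t Gv Ge T η hGe x = 1 :=
  (QuotientGroup.eq_one_iff _).2 (Subgroup.subset_normalClosure hx)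

theorem gogQuo_vin (v : V) (g : Gv v) : gogQuo bar t Gv Ge T η hGe (gogVin Gv T v g) =
    gogVert bar t Gv Ge T η hGe v g := rfl

theorem gogEdge_T {e} (he : e ∈ T) : gogEdge bar t Gv Ge T η hGe e = 1 := dif_pos he

theorem gogEdge_nT {e} (he : e ∉ T) : gogEdge bar t Gv Ge T η hGe e =
    gogQuo bar t Gv Ge T η hGe (gogEin Gv T ⟨e, he⟩) := dif_neg he

theorem gogEdge_bar (hbar : ∀ e, bar (bar e) = e) (hTbar : ∀ e ∈ T, bar e ∈ T) (e : E) :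
    gogEdge bar t Gv Ge T η hGe (bar e) = (gogEdge bar t Gv Ge T η hGe e)⁻¹ := by
  by_cases he : e ∈ T
  · rw [gogEdge_T he, gogEdge_T (hTbar e he), inv_one]
  · have hbe : bar e ∉ T := fun h => he (hbar e ▸ hTbar _ h)
    rw [gogEdge_nT he, gogEdge_nT hbe, ← mul_eq_one_iff_eq_inv, ← map_mul]
    exact gogQuo_rel (Or.inl (Or.inl ⟨e, he, hbe, rfl⟩))

theorem gogEdge_conj (e : E) (g : Ge e) :
    gogEdge bar t Gv Ge T η hGe e * gogVert bar t Gv Ge T η hGe (t e) (η e g) *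
      (gogEdge bar t Gv Ge T η hGe e)⁻¹ =
      gogVert bar t Gv Ge T η hGe (t (bar e)) (etaBar bar t Gv Ge η hGe e g) := by
  rw [← mul_inv_eq_one, ← gogQuo_vin, ← gogQuo_vin]
  by_cases he : e ∈ T
  · rw [gogEdge_T he, one_mul, inv_one, mul_one, ← map_inv, ← map_mul]
    exact gogQuo_rel (Or.inl (Or.inr ⟨e, he, g, rfl⟩))
  · rw [gogEdge_nT he]
    simp only [← map_inv, ← map_mul]
    exact gogQuo_rel (Or.inr ⟨e, he, g, rfl⟩)

theorem gogFund_gen : Subgroup.closure ((⋃ v, Set.range (gogVert bar t Gv Ge T η hGe v)) ∪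
    Set.range (gogEdge bar t Gv Ge T η hGe)) = ⊤ := by
  rw [eq_top_iff]
  set S := Subgroup.closure ((⋃ v, Set.range (gogVert bar t Gv Ge T η hGe v)) ∪
    Set.range (gogEdge bar t Gv Ge T η hGe)) with hS
  have h1 : ∀ x : Monoid.CoprodI Gv, gogKappa bar t Gv Ge T η hGe x ∈ S := by
    intro x
    induction x using Monoid.CoprodI.induction_on with
    | one => rw [map_one]; exact one_mem _
    | of v g => exact Subgroup.subset_closure (Or.inl (Set.mem_iUnion.2 ⟨v, g, rfl⟩))
    | mul x y hx hy => rw [map_mul]; exact mul_mem hx hy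
  have h2 : ∀ x : FreeGroup {e : E // e ∉ T},
      gogQuo bar t Gv Ge T η hGe (Monoid.Coprod.inr x) ∈ S := by
    have hof : ∀ e : {e : E // e ∉ T},
        gogQuo bar t Gv Ge T η hGe (Monoid.Coprod.inr (FreeGroup.of e)) ∈ S := fun e =>
      Subgroup.subset_closure (Or.inr ⟨e.1, gogEdge_nT e.2⟩)
    intro x
    induction x using FreeGroup.induction_on with
    | C1 => rw [map_one]; exact (map_one (gogQuo bar t Gv Ge T η hGe)).symm ▸ one_mem _
    | of e => exact hof e
    | inv_of e h =>
      rw [map_inv]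
      exact (map_inv (gogQuo bar t Gv Ge T η hGe) _).symm ▸ inv_mem h
    | mul x y hx hy =>
      rw [map_mul]
      exact (map_mul (gogQuo bar t Gv Ge T η hGe) _ _).symm ▸ mul_mem hx hy
  rintro x -
  obtain ⟨x, rfl⟩ := QuotientGroup.mk_surjective x
  change gogQuo bar t Gv Ge T η hGe x ∈ S
  induction x using Monoid.Coprod.induction_on with
  | inl x => exact h1 x
  | inr x => exact h2 x
  | mul x y hx hy => exact (map_mul (gogQuo bar t Gv Ge T η hGe) x y).symm ▸ mul_mem hx hy

/-- The universal property of the fundamental group. -/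
theorem gogFund_lift {P : Type} [Group P] (f : ∀ v, Gv v →* P) (p : E → P)
    (h1 : ∀ e, p (bar e) * p e = 1) (h2 : ∀ e ∈ T, p e = 1)
    (h3 : ∀ e (g : Ge e),
      p e * f (t e) (η e g) * (p e)⁻¹ = f (t (bar e)) (etaBar bar t Gv Ge η hGe e g)) :
    ∃ Ψ : GoGFund bar t Gv Ge T η hGe →* P,
      (∀ v g, Ψ (gogVert bar t Gv Ge T η hGe v g) = f v g) ∧
      ∀ e, Ψ (gogEdge bar t Gv Ge T η hGe e) = p e := by
  let F : GoGBase Gv T →* P := (Monoid.Coprod.lift (Monoid.CoprodI.lift f)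
    (FreeGroup.lift fun e => p e.1) : Monoid.Coprod _ _ →* P)
  have hFv : ∀ v g, F (gogVin Gv T v g) = f v g := by
    intro v g
    change (Monoid.Coprod.lift _ _ : Monoid.Coprod _ _ →* P) (Monoid.Coprod.inl _) = _
    rw [Monoid.Coprod.lift_apply_inl, Monoid.CoprodI.lift_of]
  have hFe : ∀ e, F (gogEin Gv T e) = p e.1 := by
    intro e
    change (Monoid.Coprod.lift _ _ : Monoid.Coprod _ _ →* P) (Monoid.Coprod.inr _) = _
    rw [Monoid.Coprod.lift_apply_inr, FreeGroup.lift_apply_of]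
  have hker : Subgroup.normalClosure (gogRels bar t Gv Ge T η hGe) ≤ F.ker := by
    refine Subgroup.normalClosure_le_normal ?_
    rintro x ((⟨e, he, hbe, rfl⟩ | ⟨e, he, g, rfl⟩) | ⟨e, he, g, rfl⟩)
    · change F _ = 1
      rw [map_mul, hFe, hFe, h1]
    · change F _ = 1
      rw [map_mul, map_inv, hFv, hFv, mul_inv_eq_one]
      have := h3 e g
      rwa [h2 e he, one_mul, inv_one, mul_one] at this
    · change F _ = 1
      simp only [map_mul, map_inv, hFv, hFe]
      rw [mul_inv_eq_one]
      exact h3 e g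
  refine ⟨QuotientGroup.lift _ F hker, fun v g => ?_, fun e => ?_⟩
  · exact hFv v g
  · by_cases he : e ∈ T
    · rw [gogEdge_T he, h2 e he]
      exact map_one F
    · rw [gogEdge_nT he]
      exact hFe ⟨e, he⟩

variable (t Gv Ge η) in
/-- The edge groups as subgroups of the vertex groups at their ends, together with the trivial
subgroup at the base vertex. -/
def edgeSub (v0 : V) : ∀ j : Option E, Subgroup (Gv (extT t v0 j))
  | none => ⊥
  | some e => (η e).range

open Classical in
variable (bar t Gv Ge η hGe) in
/-- The identification of the two copies of an edge group in the free product of the vertex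
groups (with value `1` elsewhere). -/
noncomputable def gogTheta (e : E) (m : Monoid.CoprodI Gv) : Monoid.CoprodI Gv :=
  if h : ∃ g, Monoid.CoprodI.of (η e g) = m then
    Monoid.CoprodI.of (etaBar bar t Gv Ge η hGe e h.choose) else 1

theorem gogTheta_of (hηinj : ∀ e, Function.Injective (η e)) (e : E) (g : Ge e) :
    gogTheta bar t Gv Ge η hGe e (Monoid.CoprodI.of (η e g)) =
      Monoid.CoprodI.of (etaBar bar t Gv Ge η hGe e g) := by
  have h : ∃ g', (Monoid.CoprodI.of (η e g') : Monoid.CoprodI Gv) = Monoid.CoprodI.of (η e g) :=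
    ⟨g, rfl⟩
  rw [gogTheta, dif_pos h, hηinj e (Monoid.CoprodI.of_injective _ h.choose_spec)]

theorem gogTheta_mul (hGrpBar : ∀ e, HEq (instGe (bar e)) (instGe e))
    (hηinj : ∀ e, Function.Injective (η e)) (e : E) (g g' : Ge e) :
    gogTheta bar t Gv Ge η hGe e (Monoid.CoprodI.of (η e g) * Monoid.CoprodI.of (η e g')) =
      gogTheta bar t Gv Ge η hGe e (Monoid.CoprodI.of (η e g)) *
        gogTheta bar t Gv Ge η hGe e (Monoid.CoprodI.of (η e g')) := by
  rw [← map_mul, ← map_mul, gogTheta_of hηinj, gogTheta_of hηinj, gogTheta_of hηinj,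
    etaBar_mul hGrpBar, map_mul]

variable [Fintype E] [DecidableEq E] {A : Option E → Type}
  {bar_nT : ∀ e, e ∉ T → bar e ∉ T} {v0 : V}
  (loc : ∀ j, LocalData (Gv (extT t v0 j)) (edgeSub t Gv Ge η v0 j) (A j))

/-- The lift of the assembled data to the free product of the vertex groups. -/
noncomputable def gogLift (hbar : ∀ e, bar (bar e) = e)
    (hGrpBar : ∀ e, HEq (instGe (bar e)) (instGe e))
    (hηinj : ∀ e, Function.Injective (η e)) :
    (mkData bar t T bar_nT v0 (gogVert bar t Gv Ge T η hGe) (gogEdge bar t Gv Ge T η hGe)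
      loc).Lift (Monoid.CoprodI Gv) where
  π0 a := Monoid.CoprodI.of ((loc a.1).π a.2)
  G v := (Monoid.CoprodI.of : Gv v →* _).range
  A j := (edgeSub t Gv Ge η v0 j).map Monoid.CoprodI.of
  θ := gogTheta bar t Gv Ge η hGe
  bar_bar := hbar
  A_none := Subgroup.map_bot _
  A_le j := by
    rw [tt_mkData]
    rintro _ ⟨x, -, rfl⟩
    exact ⟨x, rfl⟩
  θ_mem e := by
    rintro _ ⟨_, ⟨g, rfl⟩, rfl⟩
    exact ⟨_, ⟨_, rfl⟩, (gogTheta_of hηinj e g).symm⟩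
  θ_mul e := by
    rintro _ ⟨_, ⟨g, rfl⟩, rfl⟩ _ ⟨_, ⟨g', rfl⟩, rfl⟩
    exact gogTheta_mul hGrpBar hηinj e g g'
  θ_θ e := by
    rintro _ ⟨_, ⟨g, rfl⟩, rfl⟩
    exact (congrArg (gogTheta bar t Gv Ge η hGe (bar e)) (gogTheta_of hηinj e g)).trans
      ((gogTheta_of hηinj (bar e) _).trans (etaBar_bar hbar e g))
  NTr_mem j := by
    rintro _ ⟨w, hw, rfl⟩
    rw [tt_mkData]
    exact ⟨_, (wordVal_mk t v0 loc (fun v => Monoid.CoprodI.of) j w).symm⟩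
  NTr_nil j := ⟨[], (loc j).N_nil, rfl⟩
  NTr_rep j := by
    intro g hg
    rw [tt_mkData] at hg
    obtain ⟨g, rfl⟩ := hg
    obtain ⟨w, hw, h⟩ := (loc j).N_rep g
    refine ⟨_, ⟨w, hw, rfl⟩, _, h, ?_⟩
    rw [map_mul, map_inv]
    congr 1
    exact (wordVal_mk t v0 loc (fun v => Monoid.CoprodI.of) j w).symm
  NTr_uniq j := by
    rintro _ ⟨w, hw, rfl⟩ _ ⟨w', hw', rfl⟩ ⟨h, hh, e⟩
    have e1 := wordVal_mk t v0 loc (fun v => Monoid.CoprodI.of) j w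
    have e2 := wordVal_mk t v0 loc (fun v => Monoid.CoprodI.of) j w'
    have e' : (Monoid.CoprodI.of h : Monoid.CoprodI Gv) =
        Monoid.CoprodI.of (wordVal (loc j).π w * (wordVal (loc j).π w')⁻¹) := by
      rw [map_mul, map_inv, ← e1, ← e2]
      exact e
    rw [(loc j).N_uniq w hw w' hw' (Monoid.CoprodI.of_injective _ e' ▸ hh)]

theorem gog_good (hbar : ∀ e, bar (bar e) = e)
    (hGrpBar : ∀ e, HEq (instGe (bar e)) (instGe e))
    (hηinj : ∀ e, Function.Injective (η e))
    (htsurj : ∀ v, ∃ j, extT t v0 j = v)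
    (hTbar : ∀ e ∈ T, bar e ∈ T)
    (hTtree : ∀ u v : V, ∃! p : List E, (∀ e ∈ p, e ∈ T) ∧
      IsEdgePath (fun e => t (bar e)) t u p v ∧ List.IsChain (fun e f => f ≠ bar e) p) :
    (mkData bar t T bar_nT v0 (gogVert bar t Gv Ge T η hGe) (gogEdge bar t Gv Ge T η hGe)
      loc).Good := by
  obtain ⟨Q⟩ := (gogLift (T := T) (hGe := hGe) (bar_nT := bar_nT) loc hbar hGrpBar
    hηinj).exists_paths hTtree
  obtain ⟨Ψ, hΨv, hΨe⟩ := gogFund_lift (T := T) (hGe := hGe) (η := η)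
    (fun v => (Q.permV v).comp (Monoid.CoprodI.of : Gv v →* _).rangeRestrict) Q.permE
    Q.permE_bar (fun e he => Q.permE_tree he) (by
      intro e g
      have := Q.perm_conj e ⟨_, ⟨g, rfl⟩, rfl⟩
      refine this.trans ?_
      refine congrArg (Q.permV (t (bar e))) (Subtype.ext ?_)
      exact gogTheta_of hηinj e g)
  have hV : ∀ v (g : (Monoid.CoprodI.of : Gv v →* _).range),
      Ψ (gogKappa bar t Gv Ge T η hGe g) = Q.permV v g := by
    rintro v ⟨_, g, rfl⟩
    exact hΨv v g
  refine mkData_good _ _ _ _ _ _ _ loc ?_ hbar hTbar (fun e he => gogEdge_T he)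
    (gogEdge_bar hbar hTbar) (fun u v => (hTtree u v).exists) htsurj gogFund_gen rfl ?_ ?_
  · intro v
    rw [injective_iff_map_eq_one]
    intro g hg
    refine Monoid.CoprodI.of_injective v ?_
    rw [map_one]
    exact Q.κ_inj (κ := gogKappa bar t Gv Ge T η hGe) hV (v := v) ⟨g, rfl⟩ hg
  · rintro e _ ⟨g, rfl⟩
    exact ⟨etaBar bar t Gv Ge η hGe e g, ⟨_, rfl⟩, gogEdge_conj e g⟩
  · intro x x' hx hx' he hs
    exact Q.sval_inj (κ := gogKappa bar t Gv Ge T η hGe) (fun a => rfl) hV hΨe hx hx' he hs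

end Fundamental

/-- **Theorem (Brittenham–Hermiller–Susse).** Let `𝒢` be a finite graph of groups over a
finite connected graph `Λ` with at least one edge, in which every edge group is finitely
generated.  If for every directed edge `e` of `Λ` the vertex group `G_{t(e)}` is
autostackable respecting the subgroup `η_e(G_e)`, then the fundamental group `π₁(𝒢)`
is autostackable. -/
theorem graph_of_groups_autostackable
    {V E : Type} [Fintype V] [Fintype E]
    (bar : E → E) (t : E → V)
    (Gv : V → Type) [instGv : ∀ v, Group (Gv v)]
    (Ge : E → Type) [instGe : ∀ e, Group (Ge e)]
    (T : Set E)
    (η : ∀ e, Ge e →* Gv (t e)) (hGe : ∀ e, Ge (bar e) = Ge e)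
    (hbar : ∀ e, bar (bar e) = e) (hbarne : ∀ e, bar e ≠ e)
    (hGrpBar : ∀ e, HEq (instGe (bar e)) (instGe e))
    (hηinj : ∀ e, Function.Injective (η e))
    (hE : Nonempty E)
    (hconn : ∀ u v : V, ∃ p : List E, IsEdgePath (fun e => t (bar e)) t u p v)
    (hTbar : ∀ e ∈ T, bar e ∈ T)
    (hTtree : ∀ u v : V, ∃! p : List E, (∀ e ∈ p, e ∈ T) ∧
      IsEdgePath (fun e => t (bar e)) t u p v ∧ List.Chain' (fun e f => f ≠ bar e) p)
    (hEfg : ∀ e, Group.FG (Ge e))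
    (hvert : ∀ e : E, AutostackableRespecting (Gv (t e)) (η e).range) :
    Autostackable (GoGFund bar t Gv Ge T η hGe) := by
  classical
  obtain ⟨e0⟩ := hE
  have hloc : ∀ j, ∃ (A : Type) (_ : Fintype A),
      Nonempty (LocalData (Gv (extT t (t e0) j)) (edgeSub t Gv Ge η (t e0) j) A)
    | none => (hvert e0).bot.localData
    | some e => (hvert e).localData
  choose A hA loc using hloc
  have hpath : ∀ (p : List E) (u v : V), IsEdgePath (fun e => t (bar e)) t u p v →
      u = v ∨ ∃ e, t e = v := by
    intro p
    induction p with
    | nil => exact fun u v h => Or.inl h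
    | cons e p ih =>
      rintro u v ⟨-, h⟩
      exact Or.inr ((ih _ _ h).elim (fun h => ⟨e, h⟩) id)
  refine (gog_good (T := T) (hGe := hGe) (bar_nT := fun e he h => he (hbar e ▸ hTbar _ h))
    (fun j => (loc j).some) hbar hGrpBar hηinj ?_ hTbar hTtree).autostackable
  intro v
  obtain ⟨p, hp⟩ := hconn (t e0) v
  rcases hpath p _ _ hp with h | ⟨e, h⟩
  · exact ⟨none, h⟩
  · exact ⟨some e, h⟩
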